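/- arXiv:2410.04892 — 5 statements merged into one kernel-verified Lean document; each statement's English description precedes it below -/
import Mathlib

section
/- For every integer k ≥ 0, every matrix (a b; c d) ∈ SL₂(ℤ), and every τ in the upper half-plane ℍ, one has e_k(Λ_{(aτ+b)/(cτ+d)}(0)) = (cτ+d)^{2k} · e_k(Λ_τ(0)); that is, e_k(Λ_τ(0)) transforms like a modular form of weight 2k on SL₂(ℤ). -/
/-!
Write `j = cτ + d` for the automorphy factor of `γ`. The series `G_{2k}`, `k ≥ 2`, are multiples of
the normalised Eisenstein series `E_{2k}`, hence modular of weight `2k`. The series `G₂ = -E₂/12` is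
only quasi-modular, `G₂(γτ) = j² G₂(τ) + icj/(2π)`, but since `Im γτ = v / (j j̄)` and
`j̄ = j - 2icv`, one has `1/Im γτ = j²/v - 2icj`, so the defect cancels in `Ĝ₂`. Therefore every
term of the exponent is invariant under `(τ, z) ↦ (γτ, z/j)`, and comparing coefficients in
`genRHS (γτ) z = j⁻¹ · genRHS τ (j z)` gives the theorem.
-/

open Complex Filter
open scoped Real

noncomputable section

/-- `q = e^{2πiτ}`. -/
def qq (τ : ℂ) : ℂ := Complex.exp (2 * (π : ℂ) * Complex.I * τ)

/-- The Eisenstein series `G_{2k}(τ) = -B_{2k}/(2k) + 2 ∑_{n≥1} σ_{2k-1}(n) qⁿ`. -/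
def Gser (k : ℕ) (τ : ℂ) : ℂ :=
  -((bernoulli (2 * k) : ℚ) : ℂ) / (2 * k) +
    2 * ∑' n : ℕ, ((ArithmeticFunction.sigma (2 * k - 1)) (n + 1) : ℂ) * qq τ ^ (n + 1)

/-- The completed Eisenstein series `Ĝ₂(τ) = G₂(τ) + 1/(4πv)`. -/
def Ghat2 (τ : ℂ) : ℂ := Gser 1 τ + 1 / (4 * (π : ℂ) * (τ.im : ℂ))

/-- The right-hand side `z · exp(−Ĝ₂(τ)(2πiz)²/2 − ∑_{k≥2} G_{2k}(τ)(2πiz)^{2k}/(2k)!)`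
of the generating identity defining the `e_k(Λ_τ(0))`. -/
def genRHS (τ z : ℂ) : ℂ :=
  z * Complex.exp (-(Ghat2 τ) * (2 * (π : ℂ) * Complex.I * z) ^ 2 / 2 -
    ∑' k : ℕ, Gser (k + 2) τ * (2 * (π : ℂ) * Complex.I * z) ^ (2 * (k + 2)) /
      (Nat.factorial (2 * (k + 2)) : ℂ))

open scoped Topology MatrixGroups ComplexConjugate
open UpperHalfPlane hiding I
open EisensteinSeries (E2)

section PowerSeries

variable {𝕜 ι : Type*} [NontriviallyNormedField 𝕜] {φ : ι → ℕ} {f : 𝕜 → 𝕜} {u w : ι → 𝕜}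

lemma hasFPowerSeriesAt_ofScalars_extend (hφ : φ.Injective)
    (hu : ∀ᶠ z in 𝓝 0, HasSum (fun i => u i * z ^ φ i) (f z)) :
    HasFPowerSeriesAt f (FormalMultilinearSeries.ofScalars 𝕜 (φ.extend u 0)) 0 := by
  rw [hasFPowerSeriesAt_iff]
  filter_upwards [hu] with z hz
  rw [zero_add, ← hφ.hasSum_iff fun n hn => by
    rw [FormalMultilinearSeries.coeff_ofScalars, Function.extend_apply' _ _ _ hn, Pi.zero_apply,
      smul_zero]]
  simpa only [Function.comp_def, FormalMultilinearSeries.coeff_ofScalars, hφ.extend_apply,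
    smul_eq_mul, mul_comm] using hz

lemma coeff_unique_of_hasSum_mul_pow (hφ : φ.Injective)
    (hu : ∀ᶠ z in 𝓝 0, HasSum (fun i => u i * z ^ φ i) (f z))
    (hw : ∀ᶠ z in 𝓝 0, HasSum (fun i => w i * z ^ φ i) (f z)) : u = w := by
  have hseries := (hasFPowerSeriesAt_ofScalars_extend hφ hu).eq_formalMultilinearSeries
    (hasFPowerSeriesAt_ofScalars_extend hφ hw)
  ext i
  simpa only [FormalMultilinearSeries.coeff_ofScalars, hφ.extend_apply] using
    congrArg (fun p => p.coeff (φ i)) hseries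

end PowerSeries

section Eisenstein

lemma bernoulli_two_mul_ne_zero (k : ℕ) : bernoulli (2 * k) ≠ 0 := by
  rcases eq_or_ne k 0 with rfl | hk
  · simp
  · intro hB
    have hζ : riemannZeta (2 * k) = 0 := by simp [riemannZeta_two_mul_nat hk, hB]
    refine riemannZeta_ne_zero_of_one_le_re ?_ hζ
    have hre : (1 : ℝ) ≤ 2 * k := by exact_mod_cast (by lia : 1 ≤ 2 * k)
    simpa using hre

lemma Gser_eq_tsum_pnat (k : ℕ) (τ : ℂ) :
    Gser k τ = -(bernoulli (2 * k) : ℂ) / (2 * k) +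
      2 * ∑' n : ℕ+, (ArithmeticFunction.sigma (2 * k - 1) n : ℂ) * qq τ ^ (n : ℕ) := by
  rw [Gser, tsum_pnat_eq_tsum_succ
    (f := fun n => (ArithmeticFunction.sigma (2 * k - 1) n : ℂ) * qq τ ^ n)]

lemma Gser_eq_bernoulli_mul_E {k : ℕ} (hk : 3 ≤ 2 * k) (τ : ℍ) :
    Gser k τ = -(bernoulli (2 * k) : ℂ) / (2 * k) * ModularForm.E hk τ := by
  have hB : (bernoulli (2 * k) : ℂ) ≠ 0 := by exact_mod_cast bernoulli_two_mul_ne_zero k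
  have hk0 : (k : ℂ) ≠ 0 := by exact_mod_cast (by lia : k ≠ 0)
  rw [Gser_eq_tsum_pnat, EisensteinSeries.q_expansion_bernoulli hk (even_two_mul k)]
  simp only [zpow_natCast, qq]
  push_cast
  field_simp
  ring

lemma Gser_one_eq_E2 (τ : ℍ) : Gser 1 τ = -E2 τ / 12 := by
  rw [Gser_eq_tsum_pnat, EisensteinSeries.E2_eq_tsum_cexp, mul_one, bernoulli_two]
  simp only [qq]
  push_cast
  ring

lemma Gser_smul {k : ℕ} (hk : 3 ≤ 2 * k) (γ : SL(2, ℤ)) (τ : ℍ) :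
    Gser k ↑(γ • τ) = denom γ τ ^ (2 * k) * Gser k τ := by
  have hE : ModularForm.E hk (γ • τ) = denom γ τ ^ ((2 * k : ℕ) : ℤ) * ModularForm.E hk τ :=
    SlashInvariantForm.slash_action_eqn'' (Γ := 𝒮ℒ) (ModularForm.E hk) ⟨γ, rfl⟩ τ
  rw [Gser_eq_bernoulli_mul_E hk, Gser_eq_bernoulli_mul_E hk, hE, zpow_natCast]
  ring

lemma E2_smul (γ : SL(2, ℤ)) (τ : ℍ) :
    E2 (γ • τ) = denom γ τ ^ 2 * E2 τ - 6 * I * γ 1 0 * denom γ τ / π := by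
  have hj : denom γ τ ≠ 0 := denom_ne_zero γ τ
  have hπ : (π : ℂ) ≠ 0 := ofReal_ne_zero.mpr Real.pi_ne_zero
  have hslash := congrFun (EisensteinSeries.E2_slash_action γ) τ
  simp only [ModularForm.SL_slash_apply, Pi.sub_apply, Pi.smul_apply, EisensteinSeries.D2,
    smul_eq_mul, riemannZeta_two, zpow_neg, ← div_eq_mul_inv] at hslash
  rw [div_eq_iff (zpow_ne_zero 2 hj), zpow_ofNat] at hslash
  rw [hslash]
  field_simp

lemma Gser_one_smul (γ : SL(2, ℤ)) (τ : ℍ) :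
    Gser 1 ↑(γ • τ) = denom γ τ ^ 2 * Gser 1 τ + I * γ 1 0 * denom γ τ / (2 * π) := by
  rw [Gser_one_eq_E2, Gser_one_eq_E2, E2_smul]
  ring

lemma conj_denom (g : GL (Fin 2) ℝ) (τ : ℂ) :
    conj (denom g τ) = denom g τ - 2 * I * g 1 0 * τ.im := by
  apply Complex.ext <;> simp [denom]
  ring

lemma inv_im_smul (γ : SL(2, ℤ)) (τ : ℍ) :
    ((γ • τ).im : ℂ)⁻¹ = denom γ τ ^ 2 / τ.im - 2 * I * γ 1 0 * denom γ τ := by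
  have hv : (τ.im : ℂ) ≠ 0 := ofReal_ne_zero.mpr τ.im_ne_zero
  rw [ModularGroup.im_smul_eq_div_normSq, ofReal_div, inv_div, ← mul_conj, conj_denom, coe_im]
  simp only [Matrix.SpecialLinearGroup.coe_GL_coe_matrix, Matrix.SpecialLinearGroup.map_apply_coe,
    RingHom.mapMatrix_apply, Int.coe_castRingHom, Matrix.map_apply, ofReal_intCast]
  field_simp

lemma Ghat2_smul (γ : SL(2, ℤ)) (τ : ℍ) :
    Ghat2 ↑(γ • τ) = denom γ τ ^ 2 * Ghat2 τ := by
  have hGhat2 (s : ℍ) : Ghat2 s = Gser 1 s + (4 * (π : ℂ))⁻¹ * (s.im : ℂ)⁻¹ := by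
    rw [Ghat2, coe_im, one_div, mul_inv]
  rw [hGhat2, hGhat2, Gser_one_smul, inv_im_smul]
  ring

end Eisenstein

section GeneratingFunction

lemma genRHS_smul (γ : SL(2, ℤ)) (τ : ℍ) (z : ℂ) :
    genRHS ↑(γ • τ) z = (denom γ τ)⁻¹ * genRHS τ (denom γ τ * z) := by
  have hG (k : ℕ) : Gser (k + 2) ↑(γ • τ) = denom γ τ ^ (2 * (k + 2)) * Gser (k + 2) τ :=
    Gser_smul (by lia) γ τ
  simp only [genRHS, Ghat2_smul, hG]
  rw [mul_assoc (denom γ τ), inv_mul_cancel_left₀ (denom_ne_zero γ τ)]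
  congr 3
  · ring
  · refine tsum_congr fun k => ?_
    rw [mul_left_comm _ (denom γ τ) z, mul_pow (denom γ τ)]
    ring

variable {u w : ℕ → ℂ}

lemma eventually_hasSum_genRHS_smul {τ : ℍ} (γ : SL(2, ℤ))
    (hu : ∀ᶠ z in 𝓝 0, HasSum (fun k => u k * z ^ (2 * k + 1)) (genRHS τ z)) :
    ∀ᶠ z in 𝓝 0, HasSum (fun k => denom γ τ ^ (2 * k) * u k * z ^ (2 * k + 1))
      (genRHS ↑(γ • τ) z) := by
  have hj : denom γ τ ≠ 0 := denom_ne_zero γ τ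
  have hscale : Tendsto (denom γ τ * ·) (𝓝 0) (𝓝 0) := by
    simpa only [mul_zero] using (continuous_const_mul (denom γ τ)).tendsto 0
  filter_upwards [hscale.eventually hu] with z hz
  rw [genRHS_smul]
  refine (hz.mul_left (denom γ τ)⁻¹).congr_fun fun k => ?_
  rw [mul_pow, pow_succ (denom γ τ)]
  field_simp

lemma coeff_genRHS_smul {τ : ℍ} (γ : SL(2, ℤ))
    (hu : ∀ᶠ z in 𝓝 0, HasSum (fun k => u k * z ^ (2 * k + 1)) (genRHS τ z))
    (hw : ∀ᶠ z in 𝓝 0, HasSum (fun k => w k * z ^ (2 * k + 1)) (genRHS ↑(γ • τ) z)) (k : ℕ) :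
    w k = denom γ τ ^ (2 * k) * u k :=
  congrFun (coeff_unique_of_hasSum_mul_pow (fun m n h => by lia) hw
    (eventually_hasSum_genRHS_smul γ hu)) k

end GeneratingFunction

/-- If `e k τ = e_k(Λ_τ(0))` is defined by the generating identity
`∑_{k≥0} (−1)^k e_k(Λ_τ(0)) z^{2k+1} = z·exp(−Ĝ₂(τ)(2πiz)²/2 − ∑_{k≥2} G_{2k}(τ)(2πiz)^{2k}/(2k)!)`
for `z` near `0`, then for every `k ≥ 0`, every `(a b; c d) ∈ SL₂(ℤ)` and every `τ ∈ ℍ`,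
`e_k(Λ_{(aτ+b)/(cτ+d)}(0)) = (cτ+d)^{2k} e_k(Λ_τ(0))`. -/
theorem ek_modular_weight_two_k
    (e : ℕ → ℂ → ℂ)
    (he : ∀ τ : ℂ, 0 < τ.im → ∃ ε > 0, ∀ z : ℂ, ‖z‖ < ε →
      HasSum (fun k : ℕ => (-1 : ℂ) ^ k * e k τ * z ^ (2 * k + 1)) (genRHS τ z))
    (k : ℕ) (a b c d : ℤ) (hdet : a * d - b * c = 1)
    (τ : ℂ) (hτ : 0 < τ.im) :
    e k ((a * τ + b) / (c * τ + d)) = (c * τ + d) ^ (2 * k) * e k τ := by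
  let γ : SL(2, ℤ) := ⟨!![a, b; c, d], by rwa [Matrix.det_fin_two_of]⟩
  let t : ℍ := ⟨τ, hτ⟩
  have hγt : ((γ • t : ℍ) : ℂ) = (a * τ + b) / (c * τ + d) := by
    rw [coe_specialLinearGroup_apply]
    simp [γ, t]
  have hdenom : denom γ t = c * τ + d := by
    rw [ModularGroup.denom_apply]
    simp [γ, t]
  have hsum (s : ℍ) : ∀ᶠ z in 𝓝 (0 : ℂ),
      HasSum (fun k : ℕ => (-1) ^ k * e k s * z ^ (2 * k + 1)) (genRHS s z) := by
    obtain ⟨ε, hε, hball⟩ := he s s.im_pos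
    filter_upwards [Metric.ball_mem_nhds 0 hε] with z hz using hball z (mem_ball_zero_iff.mp hz)
  have hcoeff := coeff_genRHS_smul γ (hsum t) (hsum (γ • t)) k
  rw [hγt, hdenom, mul_left_comm] at hcoeff
  exact mul_left_cancel₀ (pow_ne_zero k (neg_ne_zero.mpr one_ne_zero)) hcoeff
end
end

section
/- For every integer k ≥ 0 there exist holomorphic functions f₀, f₁, …, f_k : ℍ → ℂ, with f_k not identically zero, such that for all τ = u + iv ∈ ℍ one has e_k(Λ_τ(0)) = ∑_{j=0}^{k} f_j(τ) v^{−j}. In other words, e_k(Λ_τ(0)) is a polynomial of degree exactly k in 1/v with holomorphic coefficients (and hence, combined with its weight-2k modular transformation, an almost holomorphic modular form of weight 2k and depth k). -/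
/-!
In `w = z²` the generating identity reads `∑ (-1)ᵏ e_k wᵏ = exp (π w / (2v)) * exp (H_τ w)`, where
`H_τ` is the exponent with the holomorphic `G₂` in place of `Ĝ₂`: the correction `1 / (4πv)` of `G₂`
only contributes the first factor. By Leibniz' rule `e_k` is thus a polynomial of degree `k` in
`1 / v`, whose coefficient of `v⁻ʲ` is a constant times the `(k - j)`-th derivative of `exp ∘ H_τ`
at `0`. The recurrence coming from `(exp ∘ H)' = H' * exp ∘ H` makes these derivatives polynomials
in the `G_{2m}(τ)`, hence holomorphic in `τ`; the one with `j = k` is `exp 0 = 1`.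

All this needs `H_τ` to converge near `0` (otherwise the infinite sum in `genRHS` would be the
default value `0`), which follows from a bound `G_{2m}(τ) = O((2m)! Aᵐ)` for fixed `τ`.
-/

open Complex Filter
open scoped Real

noncomputable section

open FormalMultilinearSeries (ofScalars)
open scoped Nat Topology ArithmeticFunction.sigma

/-! ### Power series -/

section PowerSeries

variable {𝕜 : Type*} [NontriviallyNormedField 𝕜]

lemma eventually_summable_mul_pow_of_norm_le [CompleteSpace 𝕜] {a : ℕ → 𝕜} {C A : ℝ}
    (hA : 0 ≤ A) (ha : ∀ n, ‖a n‖ ≤ C * A ^ n) :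
    ∀ᶠ w : 𝕜 in 𝓝 0, Summable fun n => a n * w ^ n := by
  have hsmall : ∀ᶠ w : 𝕜 in 𝓝 0, A * ‖w‖ < 1 := by
    have hcont : Continuous fun w : 𝕜 => A * ‖w‖ := by fun_prop
    exact hcont.continuousAt.eventually_lt continuousAt_const (by simp)
  filter_upwards [hsmall] with w hw
  refine Summable.of_norm_bounded
    ((summable_geometric_of_lt_one (by positivity) hw).mul_left C) fun n => ?_
  rw [norm_mul, norm_pow, mul_pow, ← mul_assoc]
  gcongr
  exact ha n

lemma hasFPowerSeriesAt_ofScalars_of_eventually_hasSum {f : 𝕜 → 𝕜} {a : ℕ → 𝕜}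
    (h : ∀ᶠ z in 𝓝 0, HasSum (fun n => a n * z ^ n) (f z)) :
    HasFPowerSeriesAt f (ofScalars 𝕜 a) 0 := by
  rw [hasFPowerSeriesAt_iff]
  simpa [mul_comm] using h

lemma eq_of_eventually_hasSum_mul_pow {f : 𝕜 → 𝕜} {a b : ℕ → 𝕜} {g : ℕ → ℕ}
    (hg : Function.Injective g)
    (ha : ∀ᶠ z in 𝓝 0, HasSum (fun n => a n * z ^ g n) (f z))
    (hb : ∀ᶠ z in 𝓝 0, HasSum (fun n => b n * z ^ g n) (f z)) : a = b := by
  have hasFPowerSeriesAt_extend {c : ℕ → 𝕜}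
      (hc : ∀ᶠ z in 𝓝 0, HasSum (fun n => c n * z ^ g n) (f z)) :
      HasFPowerSeriesAt f (ofScalars 𝕜 (Function.extend g c 0)) 0 := by
    refine hasFPowerSeriesAt_ofScalars_of_eventually_hasSum (hc.mono fun z hz => ?_)
    rw [← hg.hasSum_iff fun m hm => by simp [Function.extend_apply' c (0 : ℕ → 𝕜) m hm]]
    simpa [Function.comp_def, hg.extend_apply] using hz
  have hext : Function.extend g a 0 = Function.extend g b 0 :=
    FormalMultilinearSeries.ofScalars_series_injective 𝕜 𝕜 <|
      (hasFPowerSeriesAt_extend ha).eq_formalMultilinearSeries (hasFPowerSeriesAt_extend hb)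
  funext n
  simpa [hg.extend_apply] using congrFun hext (g n)

variable [CompleteSpace 𝕜] [CharZero 𝕜]

lemma eventually_hasSum_iteratedDeriv {f : 𝕜 → 𝕜} (hf : AnalyticAt 𝕜 f 0) :
    ∀ᶠ z in 𝓝 0, HasSum (fun n => iteratedDeriv n f 0 / (n ! : 𝕜) * z ^ n) (f z) := by
  simpa [mul_comm] using hasFPowerSeriesAt_iff.mp hf.hasFPowerSeriesAt

lemma iteratedDeriv_eq_of_eventually_hasSum {f : 𝕜 → 𝕜} {a : ℕ → 𝕜}
    (h : ∀ᶠ z in 𝓝 0, HasSum (fun n => a n * z ^ n) (f z)) (n : ℕ) :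
    iteratedDeriv n f 0 = (n ! : 𝕜) * a n := by
  have hf : AnalyticAt 𝕜 f 0 :=
    (hasFPowerSeriesAt_ofScalars_of_eventually_hasSum h).analyticAt
  have hcoeff := congrFun (eq_of_eventually_hasSum_mul_pow Function.injective_id h
    (eventually_hasSum_iteratedDeriv hf)) n
  rw [hcoeff, mul_div_cancel₀ _ (Nat.cast_ne_zero.mpr n.factorial_ne_zero)]

lemma eq_iteratedDeriv_div_factorial_of_eventually_hasSum_odd {f : 𝕜 → 𝕜} {a : ℕ → 𝕜}
    (hf : AnalyticAt 𝕜 f 0)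
    (h : ∀ᶠ z in 𝓝 0, HasSum (fun n => a n * z ^ (2 * n + 1)) (z * f (z ^ 2))) (n : ℕ) :
    a n = iteratedDeriv n f 0 / (n ! : 𝕜) := by
  have hsq : Tendsto (fun z : 𝕜 => z ^ 2) (𝓝 0) (𝓝 0) :=
    (continuous_pow 2).tendsto' 0 0 (by simp)
  refine congrFun (eq_of_eventually_hasSum_mul_pow (g := fun n => 2 * n + 1)
    (b := fun n => iteratedDeriv n f 0 / (n ! : 𝕜)) (fun i j hij => by simpa using hij) h ?_) n
  filter_upwards [hsq.eventually (eventually_hasSum_iteratedDeriv hf)] with z hz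
  refine (hz.mul_left z).congr_fun fun n => ?_
  ring

end PowerSeries

/-! ### Derivatives of exponentials -/

lemma iteratedDeriv_succ_cexp {f : ℂ → ℂ} {x : ℂ} (hf : AnalyticAt ℂ f x) (n : ℕ) :
    iteratedDeriv (n + 1) (fun w => cexp (f w)) x = ∑ i ∈ Finset.range (n + 1),
      n.choose i * iteratedDeriv (i + 1) f x * iteratedDeriv (n - i) (fun w => cexp (f w)) x := by
  have hexp : AnalyticAt ℂ (fun w => cexp (f w)) x := hf.cexp
  have hderiv : deriv (fun w => cexp (f w)) =ᶠ[𝓝 x] deriv f * fun w => cexp (f w) := by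
    filter_upwards [hf.eventually_analyticAt] with w hw
    rw [Pi.mul_apply, deriv_cexp hw.differentiableAt, mul_comm]
  rw [iteratedDeriv_succ', hderiv.iteratedDeriv_eq,
    iteratedDeriv_mul hf.deriv.contDiffAt hexp.contDiffAt]
  simp only [iteratedDeriv_succ']

lemma differentiableOn_iteratedDeriv_cexp {E : Type*} [NormedAddCommGroup E] [NormedSpace ℂ E]
    {s : Set E} {f : E → ℂ → ℂ} {x : ℂ} (hf : ∀ p ∈ s, AnalyticAt ℂ (f p) x)
    (hs : ∀ n, DifferentiableOn ℂ (fun p => iteratedDeriv n (f p) x) s) (n : ℕ) :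
    DifferentiableOn ℂ (fun p => iteratedDeriv n (fun w => cexp (f p w)) x) s := by
  induction n using Nat.strong_induction_on with
  | _ n ih =>
    cases n with
    | zero => simpa using (hs 0).cexp
    | succ n =>
      refine DifferentiableOn.congr ?_ fun p hp => iteratedDeriv_succ_cexp (hf p hp) n
      exact DifferentiableOn.fun_sum fun i _ => ((hs (i + 1)).const_mul _).mul (ih (n - i) (by lia))

lemma iteratedDeriv_cexp_const_mul_mul {f : ℂ → ℂ} (hf : AnalyticAt ℂ f 0) (c : ℂ) (n : ℕ) :
    iteratedDeriv n (fun w => cexp (c * w) * f w) 0 =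
      ∑ j ∈ Finset.range (n + 1), n.choose j * c ^ j * iteratedDeriv (n - j) f 0 := by
  have hexp : AnalyticAt ℂ (fun w : ℂ => cexp (c * w)) 0 := by fun_prop
  rw [iteratedDeriv_fun_mul hexp.contDiffAt hf.contDiffAt]
  simp [iteratedDeriv_cexp_const_mul]

/-! ### Growth of Bernoulli numbers and divisor sums -/

lemma sum_descFactorial_lt_factorial (n : ℕ) :
    ∑ k ∈ Finset.range (n + 1), (n + 2).descFactorial k < (n + 2)! := by
  induction n with
  | zero => decide
  | succ n ih =>
    rw [Finset.sum_range_succ', Nat.factorial_succ]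
    simp only [Nat.succ_descFactorial_succ, ← Finset.mul_sum, Nat.descFactorial_zero]
    nlinarith

lemma abs_bernoulli_le_factorial (n : ℕ) : |bernoulli n| ≤ n ! := by
  induction n using Nat.strong_induction_on with
  | _ n ih =>
    cases n with
    | zero => simp
    | succ n =>
      have hrec : ((n + 2 : ℕ) : ℚ) * bernoulli (n + 1) =
          -∑ k ∈ Finset.range (n + 1), ((n + 2).choose k : ℚ) * bernoulli k := by
        have hsum := sum_bernoulli (n + 2)
        rw [Finset.sum_range_succ, if_neg (by lia), Nat.choose_succ_self_right] at hsum
        linear_combination hsum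
      have hterm (k : ℕ) (hk : k ∈ Finset.range (n + 1)) :
          |((n + 2).choose k : ℚ) * bernoulli k| ≤ (n + 2).descFactorial k := by
        rw [abs_mul, Nat.abs_cast, Nat.descFactorial_eq_factorial_mul_choose, Nat.cast_mul,
          mul_comm]
        gcongr
        exact ih k (Finset.mem_range.mp hk)
      refine le_of_mul_le_mul_left ?_ (show (0 : ℚ) < (n + 2 : ℕ) by positivity)
      calc ((n + 2 : ℕ) : ℚ) * |bernoulli (n + 1)|
          = |∑ k ∈ Finset.range (n + 1), ((n + 2).choose k : ℚ) * bernoulli k| := by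
            rw [← Nat.abs_cast, ← abs_mul, hrec, abs_neg]
        _ ≤ ∑ k ∈ Finset.range (n + 1), ((n + 2).descFactorial k : ℚ) :=
            (Finset.abs_sum_le_sum_abs _ _).trans (Finset.sum_le_sum hterm)
        _ ≤ (n + 2)! := mod_cast (sum_descFactorial_lt_factorial n).le
        _ = (n + 2 : ℕ) * (n + 1)! := mod_cast Nat.factorial_succ (n + 1)

lemma sigma_succ_le_factorial_mul_choose (l n : ℕ) :
    σ l (n + 1) ≤ (l + 1)! * (n + (l + 1)).choose (l + 1) :=
  calc σ l (n + 1) ≤ (n + 1) ^ (l + 1) := ArithmeticFunction.sigma_le_pow_succ _ _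
    _ ≤ (n + 1).ascFactorial (l + 1) := Nat.pow_succ_le_ascFactorial _ _
    _ = _ := Nat.ascFactorial_eq_factorial_mul_choose _ _

lemma norm_sigma_mul_pow_le (l n : ℕ) {q : ℂ} {r : ℝ} (hq : ‖q‖ ≤ r) (hr : r ≤ 1) :
    ‖(σ l (n + 1) : ℂ) * q ^ (n + 1)‖ ≤
      (l + 1)! * ((n + (l + 1)).choose (l + 1) * r ^ n) := by
  have hpow : ‖q‖ ^ (n + 1) ≤ r ^ n :=
    (pow_le_pow_left₀ (norm_nonneg q) hq _).trans
      (pow_le_pow_of_le_one ((norm_nonneg q).trans hq) hr n.le_succ)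
  rw [norm_mul, norm_pow, Complex.norm_natCast, ← mul_assoc]
  exact mul_le_mul (mod_cast sigma_succ_le_factorial_mul_choose l n) hpow
    (by positivity) (by positivity)

lemma hasSum_factorial_mul_choose_mul_geometric (m : ℕ) {r : ℝ} (hr₀ : 0 ≤ r) (hr : r < 1) :
    HasSum (fun n : ℕ => (m ! : ℝ) * ((n + m).choose m * r ^ n))
      (m ! * (1 / (1 - r) ^ (m + 1))) :=
  (hasSum_choose_mul_geometric_of_norm_lt_one m
    (by rwa [Real.norm_of_nonneg hr₀])).mul_left (m ! : ℝ)

lemma norm_tsum_sigma_mul_pow_le (l : ℕ) {q : ℂ} (hq : ‖q‖ < 1) :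
    ‖∑' n : ℕ, (σ l (n + 1) : ℂ) * q ^ (n + 1)‖ ≤ (l + 1)! * (1 / (1 - ‖q‖) ^ (l + 2)) :=
  tsum_of_norm_bounded (hasSum_factorial_mul_choose_mul_geometric (l + 1) (norm_nonneg q) hq)
    fun n => norm_sigma_mul_pow_le l n le_rfl hq.le

lemma differentiableOn_tsum_sigma_mul_pow (l : ℕ) :
    DifferentiableOn ℂ (fun q : ℂ => ∑' n : ℕ, (σ l (n + 1) : ℂ) * q ^ (n + 1))
      (Metric.ball 0 1) := by
  intro q₀ hq₀
  obtain ⟨r, hq₀r, hr⟩ := exists_between (mem_ball_zero_iff.mp hq₀)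
  have hdiff : DifferentiableOn ℂ (fun q : ℂ => ∑' n : ℕ, (σ l (n + 1) : ℂ) * q ^ (n + 1))
      (Metric.ball 0 r) :=
    differentiableOn_tsum_of_summable_norm
      (hasSum_factorial_mul_choose_mul_geometric (l + 1)
        ((norm_nonneg q₀).trans hq₀r.le) hr).summable
      (fun n => by fun_prop) Metric.isOpen_ball
      fun n q hq => norm_sigma_mul_pow_le l n (mem_ball_zero_iff.mp hq).le hr.le
  exact (hdiff.differentiableAt
    (Metric.isOpen_ball.mem_nhds (mem_ball_zero_iff.mpr hq₀r))).differentiableWithinAt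

/-! ### Eisenstein series -/

lemma norm_qq_lt_one {τ : ℂ} (hτ : 0 < τ.im) : ‖qq τ‖ < 1 :=
  UpperHalfPlane.norm_exp_two_pi_I_lt_one ⟨τ, hτ⟩

lemma differentiable_qq : Differentiable ℂ qq := by
  unfold qq
  fun_prop

lemma differentiableOn_Gser (k : ℕ) : DifferentiableOn ℂ (Gser k) {τ : ℂ | 0 < τ.im} :=
  (((differentiableOn_tsum_sigma_mul_pow (2 * k - 1)).comp differentiable_qq.differentiableOn
    fun _ hτ => mem_ball_zero_iff.mpr (norm_qq_lt_one hτ)).const_mul 2).const_add _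

lemma norm_bernoulli_div_le_factorial (n : ℕ) : ‖(bernoulli n : ℂ) / n‖ ≤ n ! := by
  rw [norm_div, Complex.norm_natCast, ← Complex.ofReal_ratCast, Complex.norm_real,
    Real.norm_eq_abs]
  have hB : |(bernoulli n : ℝ)| ≤ n ! := mod_cast abs_bernoulli_le_factorial n
  rcases n.eq_zero_or_pos with rfl | hn
  · simp
  · exact (div_le_self (abs_nonneg _) (mod_cast hn)).trans hB

lemma norm_Gser_le {k : ℕ} (hk : k ≠ 0) {τ : ℂ} (hτ : 0 < τ.im) :
    ‖Gser k τ‖ ≤ (2 * k)! * (3 / (1 - ‖qq τ‖) ^ (2 * k + 1)) := by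
  set r := ‖qq τ‖
  have hr : r < 1 := norm_qq_lt_one hτ
  have hconst : ‖-(bernoulli (2 * k) : ℂ) / (2 * k)‖ ≤ (2 * k)! := by
    simpa [neg_div] using norm_bernoulli_div_le_factorial (2 * k)
  have htail := norm_tsum_sigma_mul_pow_le (2 * k - 1) hr
  rw [show 2 * k - 1 + 2 = 2 * k + 1 by lia, show 2 * k - 1 + 1 = 2 * k by lia] at htail
  have hone : 1 ≤ 1 / (1 - r) ^ (2 * k + 1) :=
    (one_le_div (pow_pos (by linarith) _)).mpr
      (pow_le_one₀ (by linarith) (by linarith [norm_nonneg (qq τ)]))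
  calc ‖Gser k τ‖ ≤ (2 * k)! + 2 * ((2 * k)! * (1 / (1 - r) ^ (2 * k + 1))) := by
        refine norm_add_le_of_le hconst ?_
        rw [norm_mul, Complex.norm_ofNat]
        gcongr
    _ ≤ (2 * k)! * (1 / (1 - r) ^ (2 * k + 1)) +
          2 * ((2 * k)! * (1 / (1 - r) ^ (2 * k + 1))) := by
        gcongr
        exact le_mul_of_one_le_right (by positivity) hone
    _ = (2 * k)! * (3 / (1 - r) ^ (2 * k + 1)) := by ring

/-! ### The holomorphic part of the generating function -/

/-- The coefficient of `wᵏ`, `w = z²`, in the exponent of the generating function with `Ĝ₂`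
replaced by its holomorphic part `G₂`. -/
def expCoeff : ℕ → ℂ → ℂ
  | 0, _ => 0
  | k + 1, τ => -Gser (k + 1) τ * (2 * (π : ℂ) * I) ^ (2 * (k + 1)) / (2 * (k + 1))!

/-- The exponent of the generating function with `Ĝ₂` replaced by its holomorphic part `G₂`, as a
function of `w = z²`; only meaningful for `w` close to `0`, where the series converges. -/
def holExponent (τ w : ℂ) : ℂ := ∑' k : ℕ, expCoeff k τ * w ^ k

/-- The `n`-th derivative at `w = 0` of the holomorphic part of the generating function; up to
constants, these are the coefficients of `e_k` as a polynomial in `1 / v`. -/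
def holCoeff (n : ℕ) (τ : ℂ) : ℂ := iteratedDeriv n (fun w => cexp (holExponent τ w)) 0

lemma differentiableOn_expCoeff (k : ℕ) : DifferentiableOn ℂ (expCoeff k) {τ : ℂ | 0 < τ.im} := by
  cases k with
  | zero => exact differentiableOn_const 0
  | succ k => exact ((differentiableOn_Gser (k + 1)).fun_neg.mul_const _).div_const _

lemma norm_expCoeff_le (k : ℕ) {τ : ℂ} (hτ : 0 < τ.im) :
    ‖expCoeff k τ‖ ≤ 3 / (1 - ‖qq τ‖) * ((2 * π / (1 - ‖qq τ‖)) ^ 2) ^ k := by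
  have hpos : 0 < 1 - ‖qq τ‖ := sub_pos.mpr (norm_qq_lt_one hτ)
  cases k with
  | zero => simpa [expCoeff] using (div_pos three_pos hpos).le
  | succ k =>
    have h2πI : ‖2 * (π : ℂ) * I‖ = 2 * π := by simp [abs_of_pos Real.pi_pos]
    rw [expCoeff, norm_div, norm_mul, norm_neg, norm_pow, h2πI, Complex.norm_natCast,
      div_le_iff₀ (by positivity)]
    calc ‖Gser (k + 1) τ‖ * (2 * π) ^ (2 * (k + 1))
        ≤ (2 * (k + 1))! * (3 / (1 - ‖qq τ‖) ^ (2 * (k + 1) + 1)) * (2 * π) ^ (2 * (k + 1)) := by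
          gcongr
          exact norm_Gser_le k.succ_ne_zero hτ
      _ = _ := by
          rw [← pow_mul, div_pow, pow_succ (1 - ‖qq τ‖)]
          field_simp

lemma eventually_summable_expCoeff {τ : ℂ} (hτ : 0 < τ.im) :
    ∀ᶠ w : ℂ in 𝓝 0, Summable fun k => expCoeff k τ * w ^ k :=
  eventually_summable_mul_pow_of_norm_le (sq_nonneg _) fun k => norm_expCoeff_le k hτ

lemma eventually_hasSum_holExponent {τ : ℂ} (hτ : 0 < τ.im) :
    ∀ᶠ w : ℂ in 𝓝 0, HasSum (fun k => expCoeff k τ * w ^ k) (holExponent τ w) :=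
  (eventually_summable_expCoeff hτ).mono fun _ h => h.hasSum

lemma analyticAt_holExponent {τ : ℂ} (hτ : 0 < τ.im) : AnalyticAt ℂ (holExponent τ) 0 :=
  (hasFPowerSeriesAt_ofScalars_of_eventually_hasSum
    (eventually_hasSum_holExponent hτ)).analyticAt

lemma holCoeff_zero (τ : ℂ) : holCoeff 0 τ = 1 := by
  have hzero : holExponent τ 0 = 0 :=
    (tsum_congr fun k => by cases k <;> simp [expCoeff]).trans tsum_zero
  simp [holCoeff, hzero]

lemma differentiableOn_holCoeff (n : ℕ) : DifferentiableOn ℂ (holCoeff n) {τ : ℂ | 0 < τ.im} :=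
  differentiableOn_iteratedDeriv_cexp (fun _ hτ => analyticAt_holExponent hτ)
    (fun m => ((differentiableOn_expCoeff m).const_mul (m ! : ℂ)).congr fun _ hτ =>
      iteratedDeriv_eq_of_eventually_hasSum (eventually_hasSum_holExponent hτ) m) n

/-! ### The generating function -/

lemma genRHS_eq_mul_cexp_holExponent {τ z : ℂ} (hτ : 0 < τ.im)
    (hz : Summable fun k => expCoeff k τ * (z ^ 2) ^ k) :
    genRHS τ z = z * (cexp (π / (2 * τ.im) * z ^ 2) * cexp (holExponent τ (z ^ 2))) := by
  have hv : (τ.im : ℂ) ≠ 0 := mod_cast hτ.ne'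
  have hπ : (π : ℂ) ≠ 0 := mod_cast Real.pi_ne_zero
  have htail : ∑' k : ℕ, Gser (k + 2) τ * (2 * (π : ℂ) * I * z) ^ (2 * (k + 2)) /
      ((2 * (k + 2))! : ℂ) = -∑' k : ℕ, expCoeff (k + 2) τ * (z ^ 2) ^ (k + 2) := by
    rw [← tsum_neg]
    refine tsum_congr fun k => ?_
    rw [expCoeff, mul_pow _ z, ← pow_mul]
    ring
  have hlow : -Ghat2 τ * (2 * (π : ℂ) * I * z) ^ 2 / 2 =
      π / (2 * τ.im) * z ^ 2 + expCoeff 1 τ * z ^ 2 := by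
    simp only [Ghat2, expCoeff, zero_add, mul_one, Nat.factorial_two, mul_pow, I_sq]
    field_simp
    push_cast
    ring
  have hsplit : holExponent τ (z ^ 2) =
      expCoeff 1 τ * z ^ 2 + ∑' k : ℕ, expCoeff (k + 2) τ * (z ^ 2) ^ (k + 2) := by
    rw [holExponent, ← hz.sum_add_tsum_nat_add 2]
    simp [Finset.sum_range_succ, expCoeff]
  rw [genRHS, htail, hlow, ← Complex.exp_add, hsplit]
  ring_nf

lemma coeff_genRHS_eq_sum {c : ℕ → ℂ} {τ : ℂ} (hτ : 0 < τ.im)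
    (hc : ∀ᶠ z : ℂ in 𝓝 0, HasSum (fun k => c k * z ^ (2 * k + 1)) (genRHS τ z)) (k : ℕ) :
    c k = ∑ j ∈ Finset.range (k + 1),
      k.choose j / k ! * (π / 2) ^ j * holCoeff (k - j) τ / (τ.im : ℂ) ^ j := by
  have hexp : AnalyticAt ℂ (fun w => cexp (holExponent τ w)) 0 := (analyticAt_holExponent hτ).cexp
  have hsq : Tendsto (fun z : ℂ => z ^ 2) (𝓝 0) (𝓝 0) :=
    (continuous_pow 2).tendsto' 0 0 (by simp)
  have hodd : ∀ᶠ z : ℂ in 𝓝 0, HasSum (fun k => c k * z ^ (2 * k + 1))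
      (z * (cexp (π / (2 * τ.im) * z ^ 2) * cexp (holExponent τ (z ^ 2)))) := by
    filter_upwards [hc, hsq.eventually (eventually_summable_expCoeff hτ)] with z hz hsum
    rwa [← genRHS_eq_mul_cexp_holExponent hτ hsum]
  rw [eq_iteratedDeriv_div_factorial_of_eventually_hasSum_odd
    (f := fun w => cexp (π / (2 * τ.im) * w) * cexp (holExponent τ w)) (by fun_prop) hodd,
    iteratedDeriv_cexp_const_mul_mul hexp, Finset.sum_div]
  refine Finset.sum_congr rfl fun j _ => ?_
  rw [← div_div, div_pow _ (τ.im : ℂ), holCoeff]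
  ring

/-- For every `k ≥ 0` there exist holomorphic functions `f₀,…,f_k` on ℍ,
with `f_k` not identically zero, such that `e_k(Λ_τ(0)) = ∑_{j=0}^{k} f_j(τ) v^{−j}`
for all `τ = u+iv ∈ ℍ`; i.e. `e_k(Λ_τ(0))` is a polynomial of degree exactly `k` in `1/v`
with holomorphic coefficients. -/
theorem ek_almost_holomorphic
    (e : ℕ → ℂ → ℂ)
    (he : ∀ τ : ℂ, 0 < τ.im → ∃ ε > 0, ∀ z : ℂ, ‖z‖ < ε →
      HasSum (fun k : ℕ => (-1 : ℂ) ^ k * e k τ * z ^ (2 * k + 1)) (genRHS τ z))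
    (k : ℕ) :
    ∃ f : ℕ → ℂ → ℂ,
      (∀ j, j ≤ k → DifferentiableOn ℂ (f j) {τ : ℂ | 0 < τ.im}) ∧
      (∃ τ : ℂ, 0 < τ.im ∧ f k τ ≠ 0) ∧
      (∀ τ : ℂ, 0 < τ.im →
        e k τ = ∑ j ∈ Finset.range (k + 1), f j τ / (τ.im : ℂ) ^ j) := by
  refine ⟨fun j τ => (-1) ^ k * (k.choose j / k ! * (π / 2) ^ j * holCoeff (k - j) τ),
    fun j _ => ((differentiableOn_holCoeff (k - j)).const_mul _).const_mul _,
    ⟨I, by simp, ?_⟩, fun τ hτ => ?_⟩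
  · simp [holCoeff_zero, Nat.factorial_ne_zero, Real.pi_ne_zero]
  · obtain ⟨ε, hε, hsum⟩ := he τ hτ
    have hcoeff := coeff_genRHS_eq_sum hτ
      (Metric.eventually_nhds_iff.mpr ⟨ε, hε, fun z hz => hsum z (by simpa using hz)⟩) k
    have hsign : (-1 : ℂ) ^ k * (-1) ^ k = 1 := pow_mul_pow_eq_one k (by norm_num)
    simp only [mul_div_assoc (_ ^ k), ← Finset.mul_sum]
    rw [← hcoeff, ← mul_assoc, hsign, one_mul]
end
end

section
/- The function Φ(z;τ) := −ϑ(z;τ)/(2π η(τ)³) (which equals the modified generating function e^{−πz²/(2v)} ∑_{k≥0} (−1)^k e_k(Λ_τ(0)) z^{2k+1} near z = 0) satisfies the modular transformation law of a Jacobi form of weight −1 and index 1/2: for every (a b; c d) ∈ SL₂(ℤ), every z ∈ ℂ, and every τ ∈ ℍ, Φ(z/(cτ+d); (aτ+b)/(cτ+d)) = (cτ+d)^{−1} e^{πicz²/(cτ+d)} Φ(z;τ). -/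
/-!
Weight `-1` and index `1/2` define a slash action of `SL₂(ℤ)` on functions of `(z, τ)`, and the
transformation law of `Φ` says that `Φ` is fixed by it. Fixed vectors of a generating set are
fixed by the whole group, so only `S` and `T` have to be checked. Under `T`, both `ϑ` and `η³` are
multiplied by `exp(πi/4)`. Under `S`, writing `ϑ` as a translate of `jacobiTheta₂` gives
`ϑ(z/τ;-1/τ) = -i (-iτ)^{1/2} exp(πiz²/τ) ϑ(z;τ)`, while `η(-1/τ)³ = (-iτ)^{3/2} η(τ)³`, and the
quotient of the two multipliers is `τ⁻¹ exp(πiz²/τ)`.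
-/

open Complex Filter
open scoped Real

noncomputable section

/-- The Jacobi theta function `ϑ(z;τ) = ∑_{n∈ℤ+1/2} e^{2πin(z+1/2)} q^{n²/2}`. -/
def jacobiThetaFn (z τ : ℂ) : ℂ :=
  ∑' n : ℤ, Complex.exp (2 * (π : ℂ) * Complex.I * ((n : ℂ) + 1 / 2) * (z + 1 / 2)) *
    Complex.exp ((π : ℂ) * Complex.I * τ * ((n : ℂ) + 1 / 2) ^ 2)

/-- The Dedekind eta function `η(τ) = q^{1/24} ∏_{n≥1} (1 - qⁿ)`. -/
def dedekindEtaFn (τ : ℂ) : ℂ :=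
  Complex.exp (2 * (π : ℂ) * Complex.I * τ / 24) * ∏' n : ℕ, (1 - qq τ ^ (n + 1))

/-- `Φ(z;τ) = −ϑ(z;τ)/(2πη(τ)³)`. -/
def PhiFn (z τ : ℂ) : ℂ := -jacobiThetaFn z τ / (2 * (π : ℂ) * dedekindEtaFn τ ^ 3)

open ModularForm ModularGroup EisensteinSeries
open UpperHalfPlane hiding I
open scoped MatrixGroups

theorem slash_eq_self_of_mem_closure {β G α : Type*} [Group G] [AddMonoid α] [SlashAction β G α]
    {k : β} {a : α} {s : Set G} (hs : ∀ g ∈ s, a ∣[k] g = a) {g : G}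
    (hg : g ∈ Subgroup.closure s) : a ∣[k] g = a := by
  induction hg using Subgroup.closure_induction with
  | mem g hg => exact hs g hg
  | one => exact SlashAction.slash_one k a
  | mul g h _ _ hg hh => rw [SlashAction.slash_mul, hg, hh]
  | inv g _ hg =>
    calc a ∣[k] g⁻¹ = (a ∣[k] g) ∣[k] g⁻¹ := by rw [hg]
      _ = a := by rw [← SlashAction.slash_mul, mul_inv_cancel, SlashAction.slash_one]

/-- The weight `k`, index `m` slash operator of the theory of Jacobi forms,
`(φ|γ)(z, τ) = (cτ + d)^{-k} exp(-2πimcz²/(cτ + d)) φ(z/(cτ + d), γτ)`, where `(c d)` is the lower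
row of `γ`. The exponent is expressed through `D2 γ τ = 2πic/(cτ + d)`, whose cocycle relation is
`D2_mul`. -/
def jacobiSlash (k : ℤ) (m : ℂ) (γ : SL(2, ℤ)) (φ : ℂ → ℍ → ℂ) (z : ℂ) (τ : ℍ) : ℂ :=
  denom γ τ ^ (-k) * cexp (-(m * D2 γ τ * z ^ 2)) * φ (z / denom γ τ) (γ • τ)

lemma denom_mul_SL (g h : SL(2, ℤ)) (τ : ℍ) :
    denom ↑(g * h) τ = denom g ↑(h • τ) * denom h τ := by
  simpa [σ] using denom_cocycle_σ (g : GL (Fin 2) ℝ) h τ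

lemma jacobiSlash_mul (k : ℤ) (m : ℂ) (g h : SL(2, ℤ)) (φ : ℂ → ℍ → ℂ) :
    jacobiSlash k m (g * h) φ = jacobiSlash k m h (jacobiSlash k m g φ) := by
  ext z τ
  have hD : m * D2 (g * h) τ * z ^ 2 =
      m * D2 h τ * z ^ 2 + m * D2 g (h • τ) * (z / denom h τ) ^ 2 := by
    rw [D2_mul, Pi.add_apply, SL_slash_apply, zpow_neg, zpow_ofNat]
    ring
  simp only [jacobiSlash]
  rw [hD, neg_add, Complex.exp_add, denom_mul_SL, mul_zpow, mul_smul, div_div,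
    mul_comm (denom h τ)]
  ring

/-- The slash operators of weight `k` and index `m`, as a `SlashAction` indexed by `(k, m)`. -/
instance jacobiSlashAction : SlashAction (ℤ × ℂ) SL(2, ℤ) (ℂ → ℍ → ℂ) where
  map w γ φ := jacobiSlash w.1 w.2 γ φ
  zero_slash w γ := by ext; simp [jacobiSlash]
  slash_one w φ := by ext; simp [jacobiSlash]
  slash_mul w g h φ := jacobiSlash_mul w.1 w.2 g h φ
  add_slash w γ φ ψ := by ext; simp [jacobiSlash, mul_add]

lemma jacobiSlash_eq_self_iff {k : ℤ} {m : ℂ} {γ : SL(2, ℤ)} {φ : ℂ → ℍ → ℂ} :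
    φ ∣[(k, m)] γ = φ ↔ ∀ (z : ℂ) (τ : ℍ), φ (z / denom γ τ) (γ • τ) =
      denom γ τ ^ k * cexp (m * D2 γ τ * z ^ 2) * φ z τ := by
  simp only [funext_iff]
  refine forall₂_congr fun z τ ↦ ?_
  have hd : denom γ τ ^ k ≠ 0 := zpow_ne_zero k (denom_ne_zero γ τ)
  change denom γ τ ^ (-k) * cexp (-(m * D2 γ τ * z ^ 2)) * _ = _ ↔ _
  rw [zpow_neg, Complex.exp_neg, ← mul_inv,
    inv_mul_eq_iff_eq_mul₀ (mul_ne_zero hd (Complex.exp_ne_zero _))]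

lemma jacobiThetaFn_eq_jacobiTheta₂ (z τ : ℂ) :
    jacobiThetaFn z τ =
      cexp (π * I * (z + 1 / 2) + π * I * τ / 4) * jacobiTheta₂ (z + 1 / 2 + τ / 2) τ := by
  rw [jacobiThetaFn, jacobiTheta₂, ← tsum_mul_left]
  refine tsum_congr fun n ↦ ?_
  rw [jacobiTheta₂_term, ← Complex.exp_add, ← Complex.exp_add]
  ring_nf

lemma jacobiThetaFn_add_one (z τ : ℂ) :
    jacobiThetaFn z (τ + 1) = cexp (π * I / 4) * jacobiThetaFn z τ := by
  rw [jacobiThetaFn, jacobiThetaFn, ← tsum_mul_left]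
  refine tsum_congr fun n ↦ ?_
  -- `(n + 1/2)² = n(n + 1) + 1/4`, and `n(n + 1)` is even.
  obtain ⟨m, hm⟩ := Int.even_mul_succ_self n
  have hm' : (n : ℂ) * (n + 1) = m + m := by exact_mod_cast hm
  have hexp : (π : ℂ) * I * (τ + 1) * (n + 1 / 2) ^ 2 =
      π * I / 4 + π * I * τ * (n + 1 / 2) ^ 2 + m * (2 * π * I) := by
    linear_combination (π * I : ℂ) * hm'
  rw [hexp, Complex.exp_add, exp_int_mul_two_pi_mul_I, Complex.exp_add]
  ring

lemma jacobiThetaFn_neg_one_div (z : ℂ) {τ : ℂ} (hτ : τ ≠ 0) :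
    jacobiThetaFn (z / τ) (-1 / τ) =
      -I * (-I * τ) ^ (1 / 2 : ℂ) * cexp (π * I * z ^ 2 / τ) * jacobiThetaFn z τ := by
  set w : ℂ := z + τ / 2 - 1 / 2 with hw
  have hw_div : z / τ + 1 / 2 + -1 / τ / 2 = w / τ := by rw [hw]; field_simp; ring
  have hw_add : z + 1 / 2 + τ / 2 = w + 1 := by rw [hw]; ring
  have hsqrt : (-I * τ) ^ (1 / 2 : ℂ) ≠ 0 := by simp [Complex.cpow_eq_zero_iff, hτ]
  have hI : -I = cexp (-π / 2 * I) := exp_neg_pi_div_two_mul_I.symm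
  have hexp : cexp (π * I * (z / τ + 1 / 2) + π * I * (-1 / τ) / 4) =
      -I * cexp (π * I * z ^ 2 / τ) * cexp (π * I * (z + 1 / 2) + π * I * τ / 4) *
        cexp (-π * I * w ^ 2 / τ) := by
    rw [hI, ← Complex.exp_add, ← Complex.exp_add, ← Complex.exp_add, hw]
    congr 1
    field_simp
    ring
  rw [jacobiThetaFn_eq_jacobiTheta₂, jacobiThetaFn_eq_jacobiTheta₂, hw_div, hw_add,
    jacobiTheta₂_add_left, jacobiTheta₂_functional_equation w τ, hexp]
  field_simp [hsqrt]

lemma dedekindEtaFn_eq_eta : dedekindEtaFn = ModularForm.eta := by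
  ext τ
  simp [dedekindEtaFn, ModularForm.eta, qq, ModularForm.eta_q, Function.Periodic.qParam]

lemma dedekindEtaFn_add_one (τ : ℂ) :
    dedekindEtaFn (τ + 1) = cexp (π * I / 12) * dedekindEtaFn τ := by
  have hq : qq (τ + 1) = qq τ := by
    rw [qq, qq, mul_add, mul_one, Complex.exp_add, exp_two_pi_mul_I, mul_one]
  rw [dedekindEtaFn, dedekindEtaFn, hq, ← mul_assoc, ← Complex.exp_add]
  ring_nf

lemma mul_cpow_of_arg_add_mem_Ioc {x y : ℂ} (h : x.arg + y.arg ∈ Set.Ioc (-π) π) (s : ℂ) :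
    (x * y) ^ s = x ^ s * y ^ s := by
  rcases eq_or_ne s 0 with rfl | hs
  · simp
  rcases eq_or_ne x 0 with rfl | hx
  · simp [hs]
  rcases eq_or_ne y 0 with rfl | hy
  · simp [hs]
  rw [cpow_def_of_ne_zero (mul_ne_zero hx hy), cpow_def_of_ne_zero hx, cpow_def_of_ne_zero hy,
    Complex.log_mul hx hy h, add_mul, Complex.exp_add]

lemma neg_I_mul_cpow {τ : ℂ} (hτ : 0 ≤ τ.im) (s : ℂ) : (-I * τ) ^ s = (I ^ s)⁻¹ * τ ^ s := by
  have harg : (-I).arg + τ.arg ∈ Set.Ioc (-π) π := by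
    have := arg_nonneg_iff.2 hτ
    have := arg_le_pi τ
    have := Real.pi_pos
    rw [arg_neg_I]
    constructor <;> linarith
  have hI : I.arg ≠ π := by
    rw [arg_I]
    linarith [Real.pi_pos]
  rw [mul_cpow_of_arg_add_mem_Ioc harg, ← inv_I, inv_cpow I s hI]

lemma dedekindEtaFn_neg_one_div {τ : ℂ} (hτ : 0 < τ.im) :
    dedekindEtaFn (-1 / τ) = (-I * τ) ^ (1 / 2 : ℂ) * dedekindEtaFn τ := by
  have h := eta_comp_eq_csqrt_I_inv hτ
  simp only [Function.comp_apply, Pi.smul_apply, Pi.mul_apply, smul_eq_mul, Complex.sqrt] at h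
  rw [dedekindEtaFn_eq_eta, h, neg_I_mul_cpow hτ.le, one_div, mul_assoc]

lemma PhiFn_add_one (z τ : ℂ) : PhiFn z (τ + 1) = PhiFn z τ := by
  have hexp : cexp (π * I / 12) ^ 3 = cexp (π * I / 4) := by
    rw [← Complex.exp_nat_mul]
    ring_nf
  rw [PhiFn, PhiFn, jacobiThetaFn_add_one, dedekindEtaFn_add_one, mul_pow, hexp, ← mul_neg,
    mul_left_comm, mul_div_mul_left _ _ (Complex.exp_ne_zero _)]

lemma PhiFn_neg_one_div (z : ℂ) {τ : ℂ} (hτ : 0 < τ.im) :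
    PhiFn (z / τ) (-1 / τ) = τ⁻¹ * cexp (π * I * z ^ 2 / τ) * PhiFn z τ := by
  have hτ0 : τ ≠ 0 := by rintro rfl; simp at hτ
  have hη : dedekindEtaFn τ ≠ 0 := dedekindEtaFn_eq_eta ▸ eta_ne_zero hτ
  have hsqrt : (-I * τ) ^ (1 / 2 : ℂ) ≠ 0 := by simp [Complex.cpow_eq_zero_iff, hτ0]
  have hsq : ((-I * τ) ^ (1 / 2 : ℂ)) ^ 2 = -I * τ := by
    rw [one_div, cpow_ofNat_inv_pow]
  rw [PhiFn, PhiFn, jacobiThetaFn_neg_one_div z hτ0, dedekindEtaFn_neg_one_div hτ]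
  generalize (-I * τ) ^ (1 / 2 : ℂ) = s at hsqrt hsq
  field_simp
  linear_combination jacobiThetaFn z τ * hsq

lemma PhiFn_slash_S :
    (fun z (τ : ℍ) ↦ PhiFn z τ) ∣[((-1 : ℤ), (1 / 2 : ℂ))] S = fun z (τ : ℍ) ↦ PhiFn z τ := by
  refine jacobiSlash_eq_self_iff.2 fun z τ ↦ ?_
  have hS : ((S • τ : ℍ) : ℂ) = -1 / τ := by
    rw [modular_S_smul, UpperHalfPlane.coe_mk, inv_neg, neg_div, one_div]
  have hexp : 1 / 2 * D2 S τ * z ^ 2 = π * I * z ^ 2 / τ := by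
    rw [D2_S]
    ring
  rw [hS, hexp, denom_S, zpow_neg_one]
  exact PhiFn_neg_one_div z τ.im_pos

lemma PhiFn_slash_T :
    (fun z (τ : ℍ) ↦ PhiFn z τ) ∣[((-1 : ℤ), (1 / 2 : ℂ))] T = fun z (τ : ℍ) ↦ PhiFn z τ := by
  refine jacobiSlash_eq_self_iff.2 fun z τ ↦ ?_
  have hT : ((T • τ : ℍ) : ℂ) = τ + 1 := by
    rw [modular_T_smul, coe_vadd, ofReal_one, add_comm]
  have hd : denom T τ = 1 := by rw [denom_apply]; simp [T]
  rw [hT, hd, D2_T]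
  simpa using PhiFn_add_one z τ

theorem PhiFn_slash (γ : SL(2, ℤ)) :
    (fun z (τ : ℍ) ↦ PhiFn z τ) ∣[((-1 : ℤ), (1 / 2 : ℂ))] γ = fun z (τ : ℍ) ↦ PhiFn z τ := by
  have hγ : γ ∈ Subgroup.closure {S, T} := by
    rw [SpecialLinearGroup.SL2Z_generators]
    exact Subgroup.mem_top γ
  refine slash_eq_self_of_mem_closure ?_ hγ
  rintro g (rfl | rfl)
  exacts [PhiFn_slash_S, PhiFn_slash_T]

/-- The function `Φ(z;τ) = −ϑ(z;τ)/(2πη(τ)³)` satisfies the modular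
transformation law of a Jacobi form of weight `−1` and index `1/2`: for every
`(a b; c d) ∈ SL₂(ℤ)`, `z ∈ ℂ` and `τ ∈ ℍ`,
`Φ(z/(cτ+d); (aτ+b)/(cτ+d)) = (cτ+d)^{−1} e^{πicz²/(cτ+d)} Φ(z;τ)`. -/
theorem Phi_modular_transformation
    (a b c d : ℤ) (hdet : a * d - b * c = 1) (z τ : ℂ) (hτ : 0 < τ.im) :
    PhiFn (z / (c * τ + d)) ((a * τ + b) / (c * τ + d)) =
      (c * τ + d)⁻¹ * Complex.exp ((π : ℂ) * Complex.I * c * z ^ 2 / (c * τ + d)) *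
        PhiFn z τ := by
  let γ : SL(2, ℤ) := ⟨!![a, b; c, d], by rw [Matrix.det_fin_two_of, hdet]⟩
  let τ' : ℍ := ⟨τ, hτ⟩
  have hd : denom γ τ' = c * τ + d := by rw [denom_apply]; simp [γ, τ']
  have hγ : ((γ • τ' : ℍ) : ℂ) = (a * τ + b) / (c * τ + d) := by
    rw [coe_specialLinearGroup_apply]
    simp [γ, τ']
  have hexp : 1 / 2 * D2 γ τ' * z ^ 2 = π * I * c * z ^ 2 / (c * τ + d) := by
    rw [D2, hd]
    simp only [γ, Matrix.of_apply, Matrix.cons_val]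
    ring
  have h := jacobiSlash_eq_self_iff.1 (PhiFn_slash γ) z τ'
  rwa [hd, hγ, hexp, zpow_neg_one] at h
end
end

section
/- Let k, a ∈ ℤ and let m be a nonnegative half-integer. Suppose φ is a complex-valued function of (z,τ) ∈ ℂ × ℍ, f : ℍ → ℂ is holomorphic and not identically zero with f((aτ+b)/(cτ+d)) = (cτ+d)^{k+a} f(τ) for all (a b; c d) ∈ SL₂(ℤ), and T_n : ℍ → ℂ (n ≥ 0) are holomorphic functions such that for every τ ∈ ℍ there is ε(τ) > 0 with φ(z;τ) = f(τ) ∑_{n≥0} T_n(τ) (2πiz)^{n+a} for 0 < |z| < ε(τ). Suppose further that φ satisfies the Jacobi modular law: for every (a b; c d) ∈ SL₂(ℤ), τ ∈ ℍ, and all z ≠ 0 sufficiently close to 0, φ(z/(cτ+d); (aτ+b)/(cτ+d)) = (cτ+d)^k e^{2πimcz²/(cτ+d)} φ(z;τ). Define T̂_n(τ) := ∑_{0≤j≤n/2} ((πm/v)^j / j!) (2πi)^{n−2j+a} T_{n−2j}(τ), where v = Im(τ). Then for every n ≥ 0 and every (a b; c d) ∈ SL₂(ℤ), T̂_n((aτ+b)/(cτ+d))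 = (cτ+d)^n T̂_n(τ); in particular T̂_n is an almost holomorphic modular form of weight n and depth at most ⌊n/2⌋. -/
open Complex Filter
open scoped Real

noncomputable section

/-- The completed trace
`T̂_n(τ) = ∑_{0≤j≤n/2} ((πm/v)^j / j!) (2πi)^{n−2j+a} T_{n−2j}(τ)`, where `v = Im τ`. -/
def Tcomp (a : ℤ) (m : ℝ) (T : ℕ → ℂ → ℂ) (n : ℕ) (τ : ℂ) : ℂ :=
  ∑ j ∈ Finset.range (n / 2 + 1),
    (((π : ℂ) * (m : ℂ) / (τ.im : ℂ)) ^ j / (Nat.factorial j : ℂ)) *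
      (2 * (π : ℂ) * Complex.I) ^ ((n : ℤ) - 2 * j + a) * T (n - 2 * j) τ

/-!
Fix `γ = (A B; C D)`, write `J = Cτ + D`, and let `S_τ(X) = ∑ (2πi)^{n+a} T_n(τ) X^n` be the formal
Taylor series of `z^{-a} φ(z;τ) / f(τ)`. Since `∑ (w^j / j!) X^{2j} = e^{wX²}`, the completed trace
`T̂_n(τ)` is the `n`-th coefficient of `e^{πmX²/v} S_τ(X)`.

If `f τ ≠ 0`, inserting the expansions of `φ` into the Jacobi law, cancelling `f τ` by its
modularity and comparing coefficients gives `S_{γτ}(X/J) = e^{2πimCX²/J} S_τ(X)`. Since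
`1/(J² Im γτ) + 2iC/J = 1/v`, multiplying by `e^{πm(X/J)²/Im γτ}` shows that the series for `γτ` at
`X/J` is the series for `τ` at `X`, which is the claim.

At the zeros of `f` the coefficients cannot be compared directly. But the zeros are isolated and
both sides of the claim are continuous in `τ`, so the identity extends to them.
-/

section Neighborhoods

open scoped Topology

theorem tendsto_div_const_nhdsNE_zero {K : Type*} [DivisionRing K] [TopologicalSpace K]
    [ContinuousMul K] {c : K} (hc : c ≠ 0) : Tendsto (fun z : K => z / c) (𝓝[≠] 0) (𝓝[≠] 0) := by
  refine tendsto_nhdsWithin_of_tendsto_nhds_of_eventually_within _ ?_ ?_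
  · exact ((continuous_id.div_const c).tendsto' 0 0 (zero_div c)).mono_left nhdsWithin_le_nhds
  · filter_upwards [self_mem_nhdsWithin] with z hz
    exact div_ne_zero hz hc

theorem eventually_nhdsNE_zero_of_norm_lt {E : Type*} [NormedAddCommGroup E] {p : E → Prop}
    (h : ∃ ε > 0, ∀ z : E, 0 < ‖z‖ → ‖z‖ < ε → p z) : ∀ᶠ z in 𝓝[≠] 0, p z := by
  obtain ⟨ε, hε, hp⟩ := h
  filter_upwards [self_mem_nhdsWithin, nhdsWithin_le_nhds (Metric.ball_mem_nhds 0 hε)] with z hz hzε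
  exact hp z (norm_pos_iff.2 hz) (mem_ball_zero_iff.1 hzε)

theorem subset_closure_inter_support {𝕜 E F : Type*} [NontriviallyNormedField 𝕜]
    [NormedAddCommGroup E] [NormedSpace 𝕜 E] [NormedAddCommGroup F] [NormedSpace 𝕜 F]
    {f : E → F} {U : Set E} (hf : AnalyticOnNhd 𝕜 f U)
    (hU : IsOpen U) (hconn : IsPreconnected U) (hf₀ : ∃ z ∈ U, f z ≠ 0) :
    U ⊆ closure (U ∩ Function.support f) := by
  obtain ⟨z₀, hz₀, hfz₀⟩ := hf₀
  intro z hz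
  by_contra hz_closure
  have hzero : f =ᶠ[𝓝 z] 0 := by
    filter_upwards [hU.mem_nhds hz, isClosed_closure.isOpen_compl.mem_nhds hz_closure]
      with w hwU hw
    by_contra hfw
    exact hw (subset_closure ⟨hwU, hfw⟩)
  exact hfz₀ (hf.eqOn_zero_of_preconnected_of_eventuallyEq_zero hconn hz hzero hz₀)

end Neighborhoods

section GaussSeries

open PowerSeries
open scoped Nat

variable {R : Type*} [CommRing R] [Algebra ℚ R]

/-- The formal power series `e^{wX²}`: its coefficients are the weights occurring in the completed
traces. -/
def gaussSeries (w : R) : R⟦X⟧ :=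
  expand 2 two_ne_zero (rescale w (exp R))

theorem coeff_gaussSeries_two_mul (w : R) (j : ℕ) :
    coeff (2 * j) (gaussSeries w) = (j ! : ℚ)⁻¹ • w ^ j := by
  rw [gaussSeries, coeff_expand_mul, coeff_rescale, coeff_exp, one_div, mul_comm,
    ← Algebra.smul_def]

theorem coeff_gaussSeries_of_not_dvd (w : R) {n : ℕ} (hn : ¬ 2 ∣ n) :
    coeff n (gaussSeries w) = 0 :=
  coeff_expand_of_not_dvd 2 two_ne_zero _ hn

theorem gaussSeries_mul_gaussSeries (w w' : R) :
    gaussSeries w * gaussSeries w' = gaussSeries (w + w') := by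
  rw [gaussSeries, gaussSeries, ← map_mul, exp_mul_exp_eq_exp_add, gaussSeries]

theorem rescale_gaussSeries (c w : R) :
    rescale c (gaussSeries w) = gaussSeries (c ^ 2 * w) := by
  ext n
  rw [coeff_rescale]
  by_cases hn : 2 ∣ n
  · obtain ⟨j, rfl⟩ := hn
    rw [coeff_gaussSeries_two_mul, coeff_gaussSeries_two_mul, mul_smul_comm, mul_pow, pow_mul]
  · rw [coeff_gaussSeries_of_not_dvd w hn, coeff_gaussSeries_of_not_dvd _ hn, mul_zero]

theorem coeff_gaussSeries_mul (w : R) (P : R⟦X⟧) (n : ℕ) :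
    coeff n (gaussSeries w * P) =
      ∑ j ∈ Finset.range (n / 2 + 1), (j ! : ℚ)⁻¹ • w ^ j * coeff (n - 2 * j) P := by
  rw [coeff_mul, Finset.Nat.sum_antidiagonal_eq_sum_range_succ_mk]
  symm
  refine Finset.sum_of_injOn (2 * ·) (mul_right_injective₀ two_ne_zero).injOn ?_ ?_ ?_
  · intro j hj
    simp only [Finset.coe_range, Set.mem_Iio] at hj ⊢
    omega
  · intro i hi hi_image
    rw [coeff_gaussSeries_of_not_dvd, zero_mul]
    rintro ⟨j, rfl⟩
    refine hi_image ⟨j, ?_, rfl⟩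
    simp only [Finset.coe_range, Set.mem_Iio, Finset.mem_range] at hi ⊢
    omega
  · intro j _
    rw [coeff_gaussSeries_two_mul]

end GaussSeries

section SumsTo

open PowerSeries
open scoped Topology Nat

/-- The power series `P` converges at `z`, with value `s`. -/
def SumsTo {R : Type*} [Semiring R] [TopologicalSpace R] (P : R⟦X⟧) (z s : R) : Prop :=
  HasSum (fun n : ℕ => coeff n P * z ^ n) s

namespace SumsTo

theorem rescale {R : Type*} [CommSemiring R] [TopologicalSpace R] {P : R⟦X⟧} {c z s : R}
    (h : SumsTo P (c * z) s) : SumsTo (PowerSeries.rescale c P) z s := by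
  refine h.congr_fun fun n => ?_
  rw [coeff_rescale, mul_pow]
  ring

theorem expand {R : Type*} [CommRing R] [TopologicalSpace R] {P : R⟦X⟧} {z s : R} {p : ℕ}
    (hp : p ≠ 0) (h : SumsTo P (z ^ p) s) : SumsTo (PowerSeries.expand p hp P) z s := by
  refine ((mul_right_injective₀ hp).hasSum_iff ?_).1 (h.congr_fun ?_)
  · intro n hn
    rw [coeff_expand_of_not_dvd, zero_mul]
    rintro ⟨j, rfl⟩
    exact hn ⟨j, rfl⟩
  · intro j
    rw [Function.comp_apply, coeff_expand_mul, pow_mul]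

theorem mul {𝕜 : Type*} [RCLike 𝕜] {P Q : 𝕜⟦X⟧} {z s t : 𝕜} (hP : SumsTo P z s)
    (hQ : SumsTo Q z t) : SumsTo (P * Q) z (s * t) := by
  have hP_norm := hP.summable.norm
  have hQ_norm := hQ.summable.norm
  have hsum := (summable_norm_sum_mul_antidiagonal_of_summable_norm hP_norm hQ_norm).of_norm.hasSum
  rw [← tsum_mul_tsum_eq_tsum_sum_antidiagonal_of_summable_norm hP_norm hQ_norm,
    hP.tsum_eq, hQ.tsum_eq] at hsum
  refine hsum.congr_fun fun n => ?_
  rw [coeff_mul, Finset.sum_mul]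
  refine Finset.sum_congr rfl fun p hp => ?_
  rw [← Finset.HasAntidiagonal.mem_antidiagonal.1 hp, pow_add]
  ring

variable {𝕜 : Type*} [NontriviallyNormedField 𝕜] {P Q : 𝕜⟦X⟧} {g : 𝕜 → 𝕜}

theorem hasFPowerSeriesAt_tsum (hP : ∀ᶠ z in 𝓝[≠] 0, SumsTo P z (g z)) :
    HasFPowerSeriesAt (fun z => ∑' n, coeff n P * z ^ n)
      (FormalMultilinearSeries.ofScalars 𝕜 fun n => coeff n P) 0 := by
  rw [hasFPowerSeriesAt_iff]
  filter_upwards [eventually_nhdsWithin_iff.1 hP] with z hz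
  have hsummable : Summable fun n => coeff n P * z ^ n := by
    by_cases hz₀ : z = 0
    · refine (hasSum_single 0 fun n hn => ?_).summable
      rw [hz₀, zero_pow hn, mul_zero]
    · exact (hz hz₀).summable
  simpa only [zero_add, FormalMultilinearSeries.coeff_ofScalars, smul_eq_mul, mul_comm]
    using hsummable.hasSum

theorem unique (hP : ∀ᶠ z in 𝓝[≠] 0, SumsTo P z (g z)) (hQ : ∀ᶠ z in 𝓝[≠] 0, SumsTo Q z (g z)) :
    P = Q := by
  have hP_series := hasFPowerSeriesAt_tsum hP
  have hQ_series := hasFPowerSeriesAt_tsum hQ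
  have heq : ∀ᶠ z in 𝓝[≠] (0 : 𝕜), ∑' n, coeff n P * z ^ n = ∑' n, coeff n Q * z ^ n := by
    filter_upwards [hP, hQ] with z hPz hQz
    exact hPz.tsum_eq.trans hQz.tsum_eq.symm
  have hseries := hP_series.eq_formalMultilinearSeries_of_eventually hQ_series
    ((hP_series.analyticAt.frequently_eq_iff_eventually_eq hQ_series.analyticAt).1 heq.frequently)
  ext n
  exact congrFun (FormalMultilinearSeries.ofScalars_series_injective 𝕜 𝕜 hseries) n

end SumsTo

theorem sumsTo_exp {𝕜 : Type*} [NormedField 𝕜] [NormedAlgebra ℚ 𝕜] [CompleteSpace 𝕜] (z : 𝕜) :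
    SumsTo (PowerSeries.exp 𝕜) z (NormedSpace.exp z) := by
  refine (NormedSpace.expSeries_div_hasSum_exp z).congr_fun fun n => ?_
  rw [coeff_exp, map_div₀, map_one, map_natCast, div_mul_eq_mul_div, one_mul]

theorem sumsTo_gaussSeries {𝕜 : Type*} [NormedField 𝕜] [NormedAlgebra ℚ 𝕜] [CompleteSpace 𝕜]
    (w z : 𝕜) : SumsTo (gaussSeries w) z (NormedSpace.exp (w * z ^ 2)) :=
  (sumsTo_exp (w * z ^ 2)).rescale.expand two_ne_zero

end SumsTo

section TraceSeries

open scoped Topology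

/-- The formal power series `∑ (2πi)^{n+a} t_n X^n`. For `t_n = T_n(τ)` it is the Taylor series of
`z^{-a} φ(z;τ) / f(τ)`. -/
def traceSeries (a : ℤ) (t : ℕ → ℂ) : PowerSeries ℂ :=
  PowerSeries.mk fun n => (2 * (π : ℂ) * Complex.I) ^ ((n : ℤ) + a) * t n

theorem Tcomp_eq_coeff (a : ℤ) (m : ℝ) (T : ℕ → ℂ → ℂ) (n : ℕ) (τ : ℂ) :
    Tcomp a m T n τ = PowerSeries.coeff n
      (gaussSeries ((π : ℂ) * m / τ.im) * traceSeries a fun n => T n τ) := by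
  rw [coeff_gaussSeries_mul, Tcomp]
  refine Finset.sum_congr rfl fun j hj => ?_
  have hjn : 2 * j ≤ n := by
    rw [Finset.mem_range] at hj
    omega
  rw [traceSeries, PowerSeries.coeff_mk, Nat.cast_sub hjn, Rat.smul_def]
  push_cast
  ring

theorem sumsTo_traceSeries {a : ℤ} {t : ℕ → ℂ} {c z s : ℂ} (hc : c ≠ 0) (hz : z ≠ 0)
    (h : HasSum (fun n : ℕ => c * t n * (2 * (π : ℂ) * Complex.I * z) ^ ((n : ℤ) + a)) s) :
    SumsTo (traceSeries a t) z (c⁻¹ * z ^ (-a) * s) := by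
  refine (h.mul_left (c⁻¹ * z ^ (-a))).congr_fun fun n => ?_
  rw [traceSeries, PowerSeries.coeff_mk, mul_zpow _ z, zpow_add₀ hz, zpow_natCast, zpow_neg]
  have := zpow_ne_zero a hz
  field_simp

theorem rescale_traceSeries {k a : ℤ} {w J c c' : ℂ} {t t' : ℕ → ℂ} {g g' : ℂ → ℂ}
    (hJ : J ≠ 0) (hc : c ≠ 0) (hc' : c' = J ^ (k + a) * c)
    (hg : ∀ᶠ z in 𝓝[≠] 0, HasSum
      (fun n : ℕ => c * t n * (2 * (π : ℂ) * Complex.I * z) ^ ((n : ℤ) + a)) (g z))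
    (hg' : ∀ᶠ z in 𝓝[≠] 0, HasSum
      (fun n : ℕ => c' * t' n * (2 * (π : ℂ) * Complex.I * z) ^ ((n : ℤ) + a)) (g' z))
    (hjac : ∀ᶠ z in 𝓝[≠] 0, g' (z / J) = J ^ k * Complex.exp (w * z ^ 2) * g z) :
    PowerSeries.rescale J⁻¹ (traceSeries a t') = gaussSeries w * traceSeries a t := by
  have hc'₀ : c' ≠ 0 := hc' ▸ mul_ne_zero (zpow_ne_zero _ hJ) hc
  refine SumsTo.unique (g := fun z => Complex.exp (w * z ^ 2) * (c⁻¹ * z ^ (-a) * g z)) ?_ ?_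
  · filter_upwards [self_mem_nhdsWithin, (tendsto_div_const_nhdsNE_zero hJ).eventually hg', hjac]
      with z (hz : z ≠ 0) hsum hlaw
    have hvalue : c'⁻¹ * (z / J) ^ (-a) * g' (z / J) =
        Complex.exp (w * z ^ 2) * (c⁻¹ * z ^ (-a) * g z) := by
      rw [hlaw, hc', zpow_add₀ hJ, div_zpow, zpow_neg J]
      have := zpow_ne_zero a hJ
      have := zpow_ne_zero k hJ
      field_simp
    have hs := sumsTo_traceSeries hc'₀ (div_ne_zero hz hJ) hsum
    rw [hvalue, div_eq_inv_mul] at hs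
    exact hs.rescale
  · filter_upwards [self_mem_nhdsWithin, hg] with z hz hsum
    rw [Complex.exp_eq_exp_ℂ]
    exact (sumsTo_gaussSeries w z).mul (sumsTo_traceSeries hc hz hsum)

end TraceSeries

section Moebius

open UpperHalfPlane
open scoped MatrixGroups

variable (γ : SL(2, ℝ)) {τ : ℂ}

theorem im_num_div_denom (τ : ℂ) :
    (num γ τ / denom γ τ).im = τ.im / Complex.normSq (denom γ τ) := by
  simpa using moebius_im γ τ

theorem im_num_div_denom_pos (hτ : 0 < τ.im) : 0 < (num γ τ / denom γ τ).im := by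
  rw [im_num_div_denom]
  exact div_pos hτ (normSq_denom_pos γ hτ.ne')

theorem denom_sub_conj_denom (τ : ℂ) :
    denom γ τ - (starRingEnd ℂ) (denom γ τ) = 2 * Complex.I * γ 1 0 * τ.im := by
  have him : (denom γ τ).im = γ 1 0 * τ.im := by simp [denom]
  rw [Complex.sub_conj, him]
  push_cast
  ring

theorem inv_im_num_div_denom_add (hτ : 0 < τ.im) :
    (denom γ τ)⁻¹ ^ 2 * ((num γ τ / denom γ τ).im : ℂ)⁻¹ + 2 * Complex.I * γ 1 0 / denom γ τ =
      (τ.im : ℂ)⁻¹ := by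
  have hJ : denom γ τ ≠ 0 := denom_ne_zero_of_im γ hτ.ne'
  have hv : (τ.im : ℂ) ≠ 0 := Complex.ofReal_ne_zero.2 hτ.ne'
  rw [im_num_div_denom, Complex.ofReal_div, ← Complex.mul_conj]
  field_simp
  linear_combination -denom_sub_conj_denom γ τ

theorem continuousOn_num_div_denom :
    ContinuousOn (fun τ => num γ τ / denom γ τ) upperHalfPlaneSet := by
  refine ContinuousOn.div ?_ ?_ fun τ hτ => denom_ne_zero_of_im γ (ne_of_gt hτ)
  · exact Continuous.continuousOn (by unfold num; fun_prop)
  · exact Continuous.continuousOn (by unfold denom; fun_prop)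

end Moebius

section Completion

open UpperHalfPlane
open scoped MatrixGroups Topology

theorem continuousOn_Tcomp {a : ℤ} {m : ℝ} {T : ℕ → ℂ → ℂ}
    (hT : ∀ n, ContinuousOn (T n) upperHalfPlaneSet) (n : ℕ) :
    ContinuousOn (Tcomp a m T n) upperHalfPlaneSet := by
  have him : ContinuousOn (fun τ : ℂ => (τ.im : ℂ)) upperHalfPlaneSet := by fun_prop
  have him₀ : ∀ τ ∈ upperHalfPlaneSet, (τ.im : ℂ) ≠ 0 := fun τ hτ =>
    Complex.ofReal_ne_zero.2 (ne_of_gt hτ)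
  exact continuousOn_finsetSum _ fun j _ =>
    ((((continuousOn_const.div him him₀).pow j).div_const _).mul continuousOn_const).mul (hT _)

theorem Tcomp_moebius_of_rescale_traceSeries {a : ℤ} {m : ℝ} {T : ℕ → ℂ → ℂ} (γ : SL(2, ℝ))
    {τ : ℂ} (hτ : 0 < τ.im)
    (h : PowerSeries.rescale (denom γ τ)⁻¹ (traceSeries a fun n => T n (num γ τ / denom γ τ)) =
      gaussSeries (2 * (π : ℂ) * Complex.I * m * γ 1 0 / denom γ τ) *
        traceSeries a fun n => T n τ)
    (n : ℕ) :
    Tcomp a m T n (num γ τ / denom γ τ) = denom γ τ ^ n * Tcomp a m T n τ := by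
  have hJ : denom γ τ ≠ 0 := denom_ne_zero_of_im γ hτ.ne'
  have hexponent : (denom γ τ)⁻¹ ^ 2 * ((π : ℂ) * m / (num γ τ / denom γ τ).im) +
      2 * (π : ℂ) * Complex.I * m * γ 1 0 / denom γ τ = (π : ℂ) * m / τ.im := by
    linear_combination (π : ℂ) * m * inv_im_num_div_denom_add γ hτ
  have hseries : PowerSeries.rescale (denom γ τ)⁻¹
      (gaussSeries ((π : ℂ) * m / (num γ τ / denom γ τ).im) *
        traceSeries a fun n => T n (num γ τ / denom γ τ)) =
      gaussSeries ((π : ℂ) * m / τ.im) * traceSeries a fun n => T n τ := by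
    rw [map_mul, h, rescale_gaussSeries, ← mul_assoc, gaussSeries_mul_gaussSeries, hexponent]
  rw [Tcomp_eq_coeff, Tcomp_eq_coeff, ← hseries, PowerSeries.coeff_rescale, ← mul_assoc,
    ← mul_pow, mul_inv_cancel₀ hJ, one_pow, one_mul]

theorem completed_trace_modular_general
    {k a : ℤ} {m : ℝ} {φ : ℂ → ℂ → ℂ} {f : ℂ → ℂ} {T : ℕ → ℂ → ℂ} (γ : SL(2, ℝ))
    (hf : upperHalfPlaneSet ⊆ closure (upperHalfPlaneSet ∩ Function.support f))
    (hfmod : ∀ τ : ℂ, 0 < τ.im → f (num γ τ / denom γ τ) = denom γ τ ^ (k + a) * f τ)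
    (hT : ∀ n, ContinuousOn (T n) upperHalfPlaneSet)
    (hexp : ∀ τ : ℂ, 0 < τ.im → ∀ᶠ z in 𝓝[≠] 0, HasSum
      (fun n : ℕ => f τ * T n τ * (2 * (π : ℂ) * Complex.I * z) ^ ((n : ℤ) + a)) (φ z τ))
    (hjac : ∀ τ : ℂ, 0 < τ.im → ∀ᶠ z in 𝓝[≠] 0,
      φ (z / denom γ τ) (num γ τ / denom γ τ) = denom γ τ ^ k *
        Complex.exp (2 * (π : ℂ) * Complex.I * m * γ 1 0 * z ^ 2 / denom γ τ) * φ z τ)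
    (n : ℕ) {τ : ℂ} (hτ : 0 < τ.im) :
    Tcomp a m T n (num γ τ / denom γ τ) = denom γ τ ^ n * Tcomp a m T n τ := by
  have heq : Set.EqOn (fun τ => Tcomp a m T n (num γ τ / denom γ τ))
      (fun τ => denom γ τ ^ n * Tcomp a m T n τ) (upperHalfPlaneSet ∩ Function.support f) := by
    rintro τ ⟨hτ, hfτ⟩
    refine Tcomp_moebius_of_rescale_traceSeries γ hτ (rescale_traceSeries
      (denom_ne_zero_of_im γ (ne_of_gt hτ)) hfτ (hfmod τ hτ) (hexp τ hτ)
      (hexp _ (im_num_div_denom_pos γ hτ)) ?_) n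
    simpa only [div_mul_eq_mul_div] using hjac τ hτ
  have hleft : ContinuousOn (fun τ => Tcomp a m T n (num γ τ / denom γ τ)) upperHalfPlaneSet :=
    (continuousOn_Tcomp hT n).comp (continuousOn_num_div_denom γ) fun _ => im_num_div_denom_pos γ
  have hright : ContinuousOn (fun τ => denom γ τ ^ n * Tcomp a m T n τ) upperHalfPlaneSet :=
    ContinuousOn.mul (Continuous.continuousOn (by unfold denom; fun_prop)) (continuousOn_Tcomp hT n)
  exact heq.of_subset_closure hleft hright Set.inter_subset_left hf hτ

end Completion

/-- Let `k, a ∈ ℤ` and `m` a nonnegative half-integer. Suppose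
`φ(z;τ) = f(τ) ∑_{n≥0} T_n(τ) (2πiz)^{n+a}` near `z = 0`, with `f` holomorphic on ℍ, not
identically zero, and modular of weight `k+a`, the `T_n` holomorphic on ℍ, and suppose `φ`
satisfies the Jacobi modular law of weight `k` and index `m`. Then each completed trace
`T̂_n` transforms like a modular form of weight `n`:
`T̂_n((aτ+b)/(cτ+d)) = (cτ+d)^n T̂_n(τ)` (hence, being a polynomial in `1/v` of degree at
most `⌊n/2⌋` with holomorphic coefficients, it is an almost holomorphic modular form of
weight `n` and depth at most `⌊n/2⌋`). -/
theorem completed_trace_modular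
    (k a : ℤ) (m : ℝ) (hm : ∃ j : ℕ, m = (j : ℝ) / 2)
    (φ : ℂ → ℂ → ℂ) (f : ℂ → ℂ) (T : ℕ → ℂ → ℂ)
    (hf : DifferentiableOn ℂ f {τ : ℂ | 0 < τ.im})
    (hf0 : ∃ τ : ℂ, 0 < τ.im ∧ f τ ≠ 0)
    (hfmod : ∀ A B C D : ℤ, A * D - B * C = 1 → ∀ τ : ℂ, 0 < τ.im →
      f ((A * τ + B) / (C * τ + D)) = (C * τ + D) ^ (k + a) * f τ)
    (hT : ∀ n : ℕ, DifferentiableOn ℂ (T n) {τ : ℂ | 0 < τ.im})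
    (hexp : ∀ τ : ℂ, 0 < τ.im → ∃ ε > 0, ∀ z : ℂ, 0 < ‖z‖ → ‖z‖ < ε →
      HasSum (fun n : ℕ =>
          f τ * T n τ * (2 * (π : ℂ) * Complex.I * z) ^ ((n : ℤ) + a)) (φ z τ))
    (hjac : ∀ A B C D : ℤ, A * D - B * C = 1 → ∀ τ : ℂ, 0 < τ.im →
      ∃ δ > 0, ∀ z : ℂ, 0 < ‖z‖ → ‖z‖ < δ →
        φ (z / (C * τ + D)) ((A * τ + B) / (C * τ + D)) =
          (C * τ + D) ^ k *
            Complex.exp (2 * (π : ℂ) * Complex.I * (m : ℂ) * C * z ^ 2 / (C * τ + D)) *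
            φ z τ)
    (n : ℕ) (A B C D : ℤ) (hdet : A * D - B * C = 1) (τ : ℂ) (hτ : 0 < τ.im) :
    Tcomp a m T n ((A * τ + B) / (C * τ + D)) = (C * τ + D) ^ n * Tcomp a m T n τ := by
  have hfH : UpperHalfPlane.upperHalfPlaneSet ⊆
      closure (UpperHalfPlane.upperHalfPlaneSet ∩ Function.support f) :=
    subset_closure_inter_support (hf.analyticOnNhd UpperHalfPlane.isOpen_upperHalfPlaneSet)
      UpperHalfPlane.isOpen_upperHalfPlaneSet (convex_halfSpace_im_gt 0).isPreconnected hf0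
  obtain ⟨γ, hγ⟩ : ∃ γ : Matrix.SpecialLinearGroup (Fin 2) ℝ, γ.1 = !![(A : ℝ), B; C, D] :=
    ⟨⟨_, by rw [Matrix.det_fin_two_of]; exact_mod_cast hdet⟩, rfl⟩
  have hnum (w : ℂ) : UpperHalfPlane.num γ w = A * w + B := by simp [hγ, UpperHalfPlane.num]
  have hdenom (w : ℂ) : UpperHalfPlane.denom γ w = C * w + D := by simp [hγ, UpperHalfPlane.denom]
  have hC : ((γ 1 0 : ℝ) : ℂ) = C := by simp [hγ]
  rw [← hnum, ← hdenom]
  refine completed_trace_modular_general γ hfH (k := k) ?_ (fun n => (hT n).continuousOn)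
    (fun w hw => eventually_nhdsNE_zero_of_norm_lt (hexp w hw)) ?_ n hτ
  · simpa only [hnum, hdenom] using hfmod A B C D hdet
  · intro w hw
    simpa only [hnum, hdenom, hC] using eventually_nhdsNE_zero_of_norm_lt (hjac A B C D hdet w hw)
end
end

section
/- Let a ∈ ℤ, let m be a nonnegative half-integer, and let T_n : ℍ → ℂ (n ≥ 0) be holomorphic functions. Define T̂_n(τ) := ∑_{0≤j≤n/2} ((πm/v)^j / j!) (2πi)^{n−2j+a} T_{n−2j}(τ), where τ = u + iv. Then T̂₀(τ) = (2πi)^a T₀(τ), T̂₁(τ) = (2πi)^{1+a} T₁(τ), and for every n ≥ 2 the lowering operator satisfies L(T̂_n)(τ) = −πm · T̂_{n−2}(τ). -/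
/-!
Since `∂v/∂τ̄ = i/2`, the operator `L = -2iv² ∂/∂τ̄` acts on functions of `v` as `v² d/dv`. It is a
derivation that kills holomorphic functions, so it only sees the coefficients `(c/v)^j / j!`, where
`c = πm`. As `v² d/dv` sends `c/v` to the constant `-c`, it acts on these divided powers of `c/v` as
`-c` times differentiation, which lowers `j` by one. In `T̂_n` this turns the `(j + 1)`-st summand
into `-πm` times the `j`-th summand of `T̂_{n-2}`, because `n - 2(j + 1) = (n - 2) - 2j`.
-/

open Complex Filter
open scoped Real

noncomputable section

/-- The lowering operator `L = -2iv² ∂/∂τ̄`, where `∂/∂τ̄ = (1/2)(∂/∂u + i ∂/∂v)`. -/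
def lowerOp (f : ℂ → ℂ) (τ : ℂ) : ℂ :=
  -2 * Complex.I * (τ.im : ℂ) ^ 2 *
    ((1 / 2 : ℂ) * (fderiv ℝ f τ 1 + Complex.I * fderiv ℝ f τ Complex.I))

section LoweringOperator

variable {τ : ℂ}

theorem lowerOp_fun_mul {f g : ℂ → ℂ} (hf : DifferentiableAt ℝ f τ)
    (hg : DifferentiableAt ℝ g τ) :
    lowerOp (fun z => f z * g z) τ = lowerOp f τ * g τ + f τ * lowerOp g τ := by
  simp only [lowerOp, fderiv_fun_mul hf hg, _root_.add_apply, _root_.smul_apply,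
    smul_eq_mul]
  ring

theorem lowerOp_fun_sum {ι : Type*} {s : Finset ι} {f : ι → ℂ → ℂ}
    (hf : ∀ i ∈ s, DifferentiableAt ℝ (f i) τ) :
    lowerOp (fun z => ∑ i ∈ s, f i z) τ = ∑ i ∈ s, lowerOp (f i) τ := by
  simp only [lowerOp, fderiv_fun_sum hf, _root_.sum_apply, Finset.mul_sum,
    ← Finset.sum_add_distrib]

theorem lowerOp_eq_zero_of_differentiableAt {f : ℂ → ℂ} (hf : DifferentiableAt ℂ f τ) :
    lowerOp f τ = 0 := by
  have cauchyRiemann : fderiv ℝ f τ I = I * fderiv ℝ f τ 1 :=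
    (differentiableAt_complex_iff_differentiableAt_real.mp hf).2
  rw [lowerOp, cauchyRiemann, ← mul_assoc I, I_mul_I, neg_one_mul, add_neg_cancel, mul_zero,
    mul_zero]

theorem lowerOp_fun_mul_of_differentiableAt {f g : ℂ → ℂ} (hf : DifferentiableAt ℝ f τ)
    (hg : DifferentiableAt ℂ g τ) :
    lowerOp (fun z => f z * g z) τ = lowerOp f τ * g τ := by
  rw [lowerOp_fun_mul hf (hg.restrictScalars ℝ), lowerOp_eq_zero_of_differentiableAt hg, mul_zero,
    add_zero]

theorem lowerOp_comp_im {g : ℝ → ℂ} {g' : ℂ} (hg : HasDerivAt g g' τ.im) :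
    lowerOp (fun z => g z.im) τ = (τ.im : ℂ) ^ 2 * g' := by
  have hcomp : HasFDerivAt (fun z : ℂ => g z.im)
      ((ContinuousLinearMap.toSpanSingleton ℝ g').comp imCLM) τ :=
    hg.hasFDerivAt.comp τ imCLM.hasFDerivAt
  have deriv_re : fderiv ℝ (fun z : ℂ => g z.im) τ 1 = 0 := by simp [hcomp.fderiv]
  have deriv_im : fderiv ℝ (fun z : ℂ => g z.im) τ I = g' := by simp [hcomp.fderiv]
  rw [lowerOp, deriv_re, deriv_im]
  linear_combination -(τ.im : ℂ) ^ 2 * g' * I_mul_I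

end LoweringOperator

section DividedPowers

/-- The divided power `(c/v)^j / j!`, the coefficient of `T̂_n` in the variable `v = Im τ` for
`c = πm`. It has the junk value `0 ^ j / j!` at `v = 0`. -/
def invDivPow (c : ℂ) (j : ℕ) (v : ℝ) : ℂ :=
  (c / v) ^ j / (Nat.factorial j : ℂ)

variable (c : ℂ)

theorem invDivPow_zero : invDivPow c 0 = fun _ => 1 := by
  ext v
  simp [invDivPow]

theorem hasDerivAt_invDivPow_succ (j : ℕ) {v : ℝ} (hv : v ≠ 0) :
    HasDerivAt (invDivPow c (j + 1)) (-c / (v : ℂ) ^ 2 * invDivPow c j v) v := by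
  have hv' : (v : ℂ) ≠ 0 := ofReal_ne_zero.mpr hv
  have hinv : HasDerivAt (fun t : ℝ => c / (t : ℂ)) (-c / (v : ℂ) ^ 2) v := by
    simpa [div_eq_mul_inv] using ((hasDerivAt_inv hv').const_mul c).comp_ofReal
  refine ((hinv.fun_pow (j + 1)).div_const ((j + 1).factorial : ℂ)).congr_deriv ?_
  have hj : ((j + 1 : ℕ) : ℂ) ≠ 0 := Nat.cast_ne_zero.mpr j.succ_ne_zero
  rw [invDivPow, Nat.add_sub_cancel, Nat.factorial_succ, Nat.cast_mul, mul_assoc,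
    mul_div_mul_left _ _ hj]
  ring

variable {τ : ℂ}

theorem differentiableAt_invDivPow_im (j : ℕ) (hτ : τ.im ≠ 0) :
    DifferentiableAt ℝ (fun z : ℂ => invDivPow c j z.im) τ := by
  cases j with
  | zero => simp [invDivPow_zero]
  | succ j =>
    exact (hasDerivAt_invDivPow_succ c j hτ).differentiableAt.comp τ imCLM.differentiableAt

theorem lowerOp_invDivPow_zero : lowerOp (fun z => invDivPow c 0 z.im) τ = 0 := by
  rw [invDivPow_zero]
  exact lowerOp_eq_zero_of_differentiableAt (differentiableAt_const 1)

theorem lowerOp_invDivPow_succ (j : ℕ) (hτ : τ.im ≠ 0) :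
    lowerOp (fun z => invDivPow c (j + 1) z.im) τ = -c * invDivPow c j τ.im := by
  have hv : (τ.im : ℂ) ≠ 0 := ofReal_ne_zero.mpr hτ
  rw [lowerOp_comp_im (hasDerivAt_invDivPow_succ c j hτ)]
  field_simp

theorem lowerOp_sum_invDivPow_mul (N : ℕ) {F : ℕ → ℂ → ℂ} (hτ : τ.im ≠ 0)
    (hF : ∀ j, DifferentiableAt ℂ (F j) τ) :
    lowerOp (fun z => ∑ j ∈ Finset.range (N + 1), invDivPow c j z.im * F j z) τ =
      -c * ∑ j ∈ Finset.range N, invDivPow c j τ.im * F (j + 1) τ := by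
  have hcoeff (j : ℕ) := differentiableAt_invDivPow_im c j hτ
  calc
    _ = ∑ j ∈ Finset.range (N + 1), lowerOp (fun z => invDivPow c j z.im) τ * F j τ := by
      rw [lowerOp_fun_sum fun j _ => (hcoeff j).fun_mul ((hF j).restrictScalars ℝ)]
      exact Finset.sum_congr rfl fun j _ => lowerOp_fun_mul_of_differentiableAt (hcoeff j) (hF j)
    _ = ∑ j ∈ Finset.range N, -c * invDivPow c j τ.im * F (j + 1) τ := by
      simp only [Finset.sum_range_succ', lowerOp_invDivPow_zero, zero_mul, add_zero,
        lowerOp_invDivPow_succ c _ hτ]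
    _ = _ := by simp only [Finset.mul_sum, mul_assoc]

end DividedPowers

section CompletedTrace

variable (a : ℤ) (m : ℝ) (T : ℕ → ℂ → ℂ)

/-- The holomorphic factor `(2πi)^{n-2j+a} T_{n-2j}` in the `j`-th summand of `T̂_n`. The index of
`T` is truncated at `0`, which is harmless in the range `j ≤ n/2` of that sum. -/
def traceFactor (n j : ℕ) (τ : ℂ) : ℂ :=
  (2 * (π : ℂ) * I) ^ ((n : ℤ) - 2 * j + a) * T (n - 2 * j) τ

theorem Tcomp_eq_sum (n : ℕ) :
    Tcomp a m T n = fun τ => ∑ j ∈ Finset.range (n / 2 + 1),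
      invDivPow ((π : ℂ) * m) j τ.im * traceFactor a T n j τ := by
  ext τ
  simp only [Tcomp, invDivPow, traceFactor, mul_assoc]

theorem traceFactor_add_two_succ (n j : ℕ) :
    traceFactor a T (n + 2) (j + 1) = traceFactor a T n j := by
  have hexp : ((n + 2 : ℕ) : ℤ) - 2 * (j + 1 : ℕ) + a = n - 2 * j + a := by
    push_cast
    ring
  have hidx : n + 2 - 2 * (j + 1) = n - 2 * j := by omega
  ext τ
  rw [traceFactor, traceFactor, hexp, hidx]

variable {T}

theorem lowerOp_Tcomp_add_two {τ : ℂ} (hτ : τ.im ≠ 0)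
    (hT : ∀ n, DifferentiableAt ℂ (T n) τ) (n : ℕ) :
    lowerOp (Tcomp a m T (n + 2)) τ = -(π : ℂ) * (m : ℂ) * Tcomp a m T n τ := by
  have hfactor (j : ℕ) : DifferentiableAt ℂ (traceFactor a T (n + 2) j) τ := (hT _).const_mul _
  have hlen : (n + 2) / 2 = n / 2 + 1 := Nat.add_div_right n two_pos
  simp only [Tcomp_eq_sum, lowerOp_sum_invDivPow_mul _ _ hτ hfactor, traceFactor_add_two_succ,
    hlen, neg_mul]

end CompletedTrace

theorem completed_trace_lowering_general
    (a : ℤ) (m : ℝ)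
    (T : ℕ → ℂ → ℂ)
    (hT : ∀ n : ℕ, DifferentiableOn ℂ (T n) {τ : ℂ | 0 < τ.im}) :
    (∀ τ : ℂ, 0 < τ.im →
      Tcomp a m T 0 τ = (2 * (π : ℂ) * Complex.I) ^ a * T 0 τ) ∧
    (∀ τ : ℂ, 0 < τ.im →
      Tcomp a m T 1 τ = (2 * (π : ℂ) * Complex.I) ^ (1 + a) * T 1 τ) ∧
    (∀ n : ℕ, 2 ≤ n → ∀ τ : ℂ, 0 < τ.im →
      lowerOp (Tcomp a m T n) τ = -(π : ℂ) * (m : ℂ) * Tcomp a m T (n - 2) τ) := by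
  refine ⟨fun τ _ => by simp [Tcomp], fun τ _ => by simp [Tcomp], fun n hn τ hτ => ?_⟩
  obtain ⟨k, rfl⟩ := Nat.exists_eq_add_of_le' hn
  have hℍ : {z : ℂ | 0 < z.im} ∈ nhds τ :=
    (isOpen_lt continuous_const Complex.continuous_im).mem_nhds hτ
  exact lowerOp_Tcomp_add_two a m hτ.ne' (fun i => (hT i).differentiableAt hℍ) k

/-- Let `a ∈ ℤ`, `m` a nonnegative half-integer, and `T_n : ℍ → ℂ`
holomorphic. Then `T̂₀ = (2πi)^a T₀`, `T̂₁ = (2πi)^{1+a} T₁`, and for `n ≥ 2` the lowering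
operator satisfies `L(T̂_n) = −πm·T̂_{n−2}` on ℍ. -/
theorem completed_trace_lowering
    (a : ℤ) (m : ℝ) (hm : ∃ j : ℕ, m = (j : ℝ) / 2)
    (T : ℕ → ℂ → ℂ)
    (hT : ∀ n : ℕ, DifferentiableOn ℂ (T n) {τ : ℂ | 0 < τ.im}) :
    (∀ τ : ℂ, 0 < τ.im →
      Tcomp a m T 0 τ = (2 * (π : ℂ) * Complex.I) ^ a * T 0 τ) ∧
    (∀ τ : ℂ, 0 < τ.im →
      Tcomp a m T 1 τ = (2 * (π : ℂ) * Complex.I) ^ (1 + a) * T 1 τ) ∧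
    (∀ n : ℕ, 2 ≤ n → ∀ τ : ℂ, 0 < τ.im →
      lowerOp (Tcomp a m T n) τ = -(π : ℂ) * (m : ℂ) * Tcomp a m T (n - 2) τ) :=
  completed_trace_lowering_general a m T hT
end
end
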